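/- The range T(LlogL(-1,1)) of the finite Hilbert transform on LlogL is a proper dense linear subspace of L^1(-1,1): it is dense in L^1(-1,1), and there exists a function g ∈ L^1(-1,1) that does not belong to T(LlogL(-1,1)). -/

import Mathlib

open MeasureTheory Set Filter

noncomputable section

/-- Lebesgue measure restricted to the interval `(-1, 1)`. -/
def μI : Measure ℝ := volume.restrict (Set.Ioo (-1 : ℝ) 1)

/-- The finite Hilbert transform: the principal-value limit
`T(f)(t) = lim_{ε→0⁺} (1/π) ∫_{x∈(-1,1), |x-t|≥ε} f(x)/(x-t) dx`. -/
def FHT (f : ℝ → ℂ) (t : ℝ) : ℂ :=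
  limUnder (nhdsWithin (0 : ℝ) (Set.Ioi 0)) fun ε : ℝ =>
    (Real.pi : ℂ)⁻¹ *
      ∫ x in {x : ℝ | x ∈ Set.Ioo (-1 : ℝ) 1 ∧ ε ≤ |x - t|}, f x / ((x : ℂ) - (t : ℂ))

/-- The operator `T̂(g)(x) = -(1-x²)^{-1/2} T(t ↦ √(1-t²) g(t))(x)`. -/
def hatT (g : ℝ → ℂ) (x : ℝ) : ℂ :=
  -((Real.sqrt (1 - x ^ 2) : ℂ))⁻¹ * FHT (fun t => (Real.sqrt (1 - t ^ 2) : ℂ) * g t) x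

/-- Membership in the Zygmund space `L log L(-1,1)`:
`f` is a.e. measurable on `(-1,1)` and `∫ |f| log⁺|f| < ∞`. -/
def MemLlogL (f : ℝ → ℂ) : Prop :=
  AEStronglyMeasurable f μI ∧
    IntegrableOn (fun x => ‖f x‖ * max (Real.log ‖f x‖) 0) (Set.Ioo (-1 : ℝ) 1)

/-- The distribution function `λ ↦ |{x ∈ (-1,1) : |f(x)| > λ}|`. -/
def distFun (f : ℝ → ℂ) (lam : ℝ) : ℝ :=
  (volume {x : ℝ | x ∈ Set.Ioo (-1 : ℝ) 1 ∧ lam < ‖f x‖}).toReal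

/-- The decreasing rearrangement `f*` of `f`, a function on `(0,2)`. -/
def decRearr (f : ℝ → ℂ) (t : ℝ) : ℝ :=
  sInf {lam : ℝ | 0 ≤ lam ∧ distFun f lam ≤ t}

/-- The `L log L` norm `‖f‖ = ∫_0^2 f*(t) log(2e/t) dt`. -/
def llogLNorm (f : ℝ → ℂ) : ℝ :=
  ∫ t in Set.Ioo (0 : ℝ) 2, decRearr f t * Real.log (2 * Real.exp 1 / t)

/-- The `L(log L)^α` norm `∫_0^2 f*(t) log^α(2e/t) dt` (for `α = 0` this is the `L¹` norm). -/
def zygNorm (α : ℝ) (f : ℝ → ℂ) : ℝ :=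
  ∫ t in Set.Ioo (0 : ℝ) 2, decRearr f t * Real.log (2 * Real.exp 1 / t) ^ α

/-- Membership in the Zygmund space `L(log L)^α(-1,1)`. -/
def MemZyg (α : ℝ) (f : ℝ → ℂ) : Prop :=
  AEStronglyMeasurable f μI ∧
    IntegrableOn (fun t => decRearr f t * Real.log (2 * Real.exp 1 / t) ^ α)
      (Set.Ioo (0 : ℝ) 2)

/-- Membership in `L(log L)²(-1,1)`: `∫ |f| (log(2+|f|))² < ∞`. -/
def MemLlogL2 (f : ℝ → ℂ) : Prop :=
  AEStronglyMeasurable f μI ∧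
    IntegrableOn (fun x => ‖f x‖ * Real.log (2 + ‖f x‖) ^ 2) (Set.Ioo (-1 : ℝ) 1)

/-- The constant `c(β,γ) = max{1/(1-β), 1/(1-γ), 1/(β+γ-1)}`. -/
def cBG (β γ : ℝ) : ℝ := max (max (1 / (1 - β)) (1 / (1 - γ))) (1 / (β + γ - 1))

/-!
Density: the weight `(1 - x²)^{-1/2}` has vanishing principal value against `1 / (x - t)`, so `T`
maps polynomial multiples of this weight, which lie in `L log L`, onto all polynomials.

Properness: let `f ∈ L log L` be real. For bounded `h` with Cauchy transform `F`, integrating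
`cosh F - 1` along a rectangle bounds the integral of `cosh` of the conjugate Poisson integral of
`h`. By duality and Young's inequality `a q ≲ a log a + (cosh q - 1)`, the conjugate Poisson
integrals of `f` are uniformly integrable, hence converge in `L¹` to `π T f`. Integrating the
Cauchy transform of `f` times `log (z + iδ)` along a rectangle shows that the pairings of
`T f` with `log |t + iδ|` stay bounded as `δ → 0`. A nonnegative function `g` in the range therefore
satisfies `|log δ| ∫₀^δ g = O(1)`, which fails for `1 / (2x (1 - log x)^{3/2})`.
-/

open Complex (I)
open scoped Polynomial Real Topology

section PrincipalValue

variable {E F : Type*} [NormedAddCommGroup E] [NormedSpace ℝ E] [NormedAddCommGroup F]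
  [NormedSpace ℝ F] {μ : Measure ℝ} {f g : ℝ → E} {t ε : ℝ} {L M : E}

/-- `L` is the Cauchy principal value `p.v. ∫ f(x) / (x - t) dμ(x)`. -/
def HasPrincipalValue (μ : Measure ℝ) (f : ℝ → E) (t : ℝ) (L : E) : Prop :=
  Tendsto (fun ε => ∫ x in {x | ε ≤ |x - t|}, (x - t)⁻¹ • f x ∂μ) (𝓝[>] 0) (𝓝 L)

lemma measurableSet_le_abs_sub (t ε : ℝ) : MeasurableSet {x : ℝ | ε ≤ |x - t|} :=
  measurableSet_le measurable_const (by fun_prop)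

lemma integrableOn_inv_sub_smul (hf : Integrable f μ) (t : ℝ) (hε : 0 < ε) :
    IntegrableOn (fun x => (x - t)⁻¹ • f x) {x | ε ≤ |x - t|} μ := by
  refine hf.integrableOn.bdd_smul ε⁻¹ (by fun_prop) ?_
  refine ae_restrict_of_forall_mem (measurableSet_le_abs_sub t ε) fun x hx => ?_
  rw [norm_inv, Real.norm_eq_abs]
  exact inv_anti₀ hε hx

lemma HasPrincipalValue.add (hf : Integrable f μ) (hg : Integrable g μ)
    (hL : HasPrincipalValue μ f t L) (hM : HasPrincipalValue μ g t M) :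
    HasPrincipalValue μ (fun x => f x + g x) t (L + M) := by
  refine (Tendsto.add hL hM).congr' ?_
  filter_upwards [self_mem_nhdsWithin] with ε hε
  rw [← integral_add (integrableOn_inv_sub_smul hf t hε) (integrableOn_inv_sub_smul hg t hε)]
  simp only [smul_add]

lemma HasPrincipalValue.clm_comp [CompleteSpace E] [CompleteSpace F] (A : E →L[ℝ] F)
    (hf : Integrable f μ) (hL : HasPrincipalValue μ f t L) :
    HasPrincipalValue μ (fun x => A (f x)) t (A L) := by
  refine ((A.continuous.tendsto L).comp hL).congr' ?_
  filter_upwards [self_mem_nhdsWithin] with ε hε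
  rw [Function.comp_apply, ← A.integral_comp_comm (integrableOn_inv_sub_smul hf t hε)]
  simp only [map_smul]

lemma tendsto_setIntegral_le_abs_sub [NullSingletonClass μ] (hf : Integrable f μ) (t : ℝ) :
    Tendsto (fun ε => ∫ x in {x | ε ≤ |x - t|}, f x ∂μ) (𝓝[>] 0) (𝓝 (∫ x, f x ∂μ)) := by
  simp only [← integral_indicator (measurableSet_le_abs_sub t _)]
  refine tendsto_integral_filter_of_dominated_convergence (fun x => ‖f x‖)
    (.of_forall fun ε => hf.aestronglyMeasurable.indicator (measurableSet_le_abs_sub t ε))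
    (.of_forall fun ε => .of_forall fun x => norm_indicator_le_norm_self _ _) hf.norm ?_
  filter_upwards [compl_mem_ae_iff.2 (measure_singleton t)] with x hx
  refine tendsto_const_nhds.congr' ?_
  have hxt : 0 < |x - t| := abs_pos.2 (sub_ne_zero.2 hx)
  filter_upwards [mem_nhdsWithin_of_mem_nhds (Iio_mem_nhds hxt)] with ε hε
  have hmem : x ∈ {x | ε ≤ |x - t|} := (mem_Iio.1 hε).le
  exact (indicator_of_mem hmem f).symm

lemma HasPrincipalValue.id_smul [NullSingletonClass μ] (hf : Integrable f μ)
    (hL : HasPrincipalValue μ f t L) :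
    HasPrincipalValue μ (fun x => x • f x) t (t • L + ∫ x, f x ∂μ) := by
  refine ((Tendsto.const_smul hL t).add (tendsto_setIntegral_le_abs_sub hf t)).congr' ?_
  filter_upwards [self_mem_nhdsWithin] with ε hε
  have hint : IntegrableOn (fun x => t • (x - t)⁻¹ • f x) {x | ε ≤ |x - t|} μ :=
    (integrableOn_inv_sub_smul hf t hε).smul t
  rw [← integral_smul, ← integral_add hint hf.integrableOn]
  refine setIntegral_congr_fun (measurableSet_le_abs_sub t ε) fun x hx => ?_
  have hxt : x - t ≠ 0 := abs_pos.1 (lt_of_lt_of_le hε hx)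
  calc t • (x - t)⁻¹ • f x + f x = (t * (x - t)⁻¹ + 1) • f x := by module
    _ = (x - t)⁻¹ • x • f x := by rw [smul_smul]; congr 1; field_simp; ring

lemma HasPrincipalValue.indicator {s : Set ℝ} (hs : MeasurableSet s)
    (h : HasPrincipalValue (μ.restrict s) f t L) : HasPrincipalValue μ (s.indicator f) t L := by
  refine Tendsto.congr (fun ε => ?_) h
  rw [Measure.restrict_restrict (measurableSet_le_abs_sub t ε), ← setIntegral_indicator hs]
  simp only [indicator_smul_apply]

end PrincipalValue

section AirfoilWeight

variable {t x : ℝ}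

/-- The weight `(1 - x²)^{-1/2}`, which spans the kernel of the finite Hilbert transform. -/
def airfoilWeight (x : ℝ) : ℝ := (√(1 - x ^ 2))⁻¹

lemma airfoilWeight_nonneg (x : ℝ) : 0 ≤ airfoilWeight x := by
  unfold airfoilWeight
  positivity

lemma one_sub_sq_pos (hx : x ∈ Ioo (-1 : ℝ) 1) : 0 < 1 - x ^ 2 := by
  nlinarith [hx.1, hx.2]

lemma airfoilWeight_rpow (hx : x ∈ Ioo (-1 : ℝ) 1) (s : ℝ) :
    airfoilWeight x ^ s = (1 - x ^ 2) ^ (-s / 2) := by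
  have hx0 := (one_sub_sq_pos hx).le
  rw [airfoilWeight, Real.sqrt_eq_rpow, ← Real.rpow_neg hx0, ← Real.rpow_mul hx0]
  ring_nf

lemma integrable_airfoilWeight : Integrable airfoilWeight μI := by
  have h := Polynomial.Chebyshev.intervalIntegrable_sqrt_one_sub_sq_inv
  rw [intervalIntegrable_iff_integrableOn_Ioo_of_le (by norm_num)] at h
  simpa only [Real.sqrt_inv] using! h

lemma integral_airfoilWeight : ∫ x, airfoilWeight x ∂μI = π := by
  have h := Polynomial.Chebyshev.integral_eval_T_real_measureT_zero
  rw [Polynomial.Chebyshev.integral_measureT, intervalIntegral.integral_of_le (by norm_num),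
    integral_Ioc_eq_integral_Ioo] at h
  simpa only [Polynomial.Chebyshev.T_zero, Polynomial.eval_one, one_mul, Real.sqrt_inv] using! h

lemma integrableOn_one_sub_sq_rpow {s : ℝ} (hs : -1 < s) (hs' : s ≤ 0) :
    IntegrableOn (fun x : ℝ => (1 - x ^ 2) ^ s) (Ioo (-1) 1) := by
  have hleft : IntegrableOn (fun x : ℝ => (1 + x) ^ s) (Ioo (-1) 1) := by
    rw [← intervalIntegrable_iff_integrableOn_Ioo_of_le (by norm_num)]
    have h := (intervalIntegral.intervalIntegrable_rpow' (a := 0) (b := 2) hs).comp_add_left 1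
    norm_num1 at h
    exact h
  have hright : IntegrableOn (fun x : ℝ => (1 - x) ^ s) (Ioo (-1) 1) := by
    rw [← intervalIntegrable_iff_integrableOn_Ioo_of_le (by norm_num)]
    have h := (intervalIntegral.intervalIntegrable_rpow' (a := 2) (b := 0) hs).comp_sub_left 1
    norm_num at h
    exact h
  refine (hleft.add hright).mono' (Measurable.pow_const (by fun_prop) s).aestronglyMeasurable
    (ae_restrict_of_forall_mem measurableSet_Ioo ?_)
  intro x hx
  have hx0 := one_sub_sq_pos hx
  have hl : 0 < 1 + x := by linarith [hx.1]
  have hr : 0 < 1 - x := by linarith [hx.2]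
  rw [Real.norm_of_nonneg (Real.rpow_nonneg hx0.le s), Pi.add_apply]
  rcases le_total 0 x with h | h
  · have : (1 - x ^ 2) ^ s ≤ (1 - x) ^ s := Real.rpow_le_rpow_of_nonpos hr (by nlinarith) hs'
    linarith [Real.rpow_nonneg hl.le s]
  · have : (1 - x ^ 2) ^ s ≤ (1 + x) ^ s := Real.rpow_le_rpow_of_nonpos hl (by nlinarith) hs'
    linarith [Real.rpow_nonneg hr.le s]

/-- The function `1 - xt + √(1 - x²) √(1 - t²)`, equal to `1 - cos (θ + φ)` for `x = cos θ` and
`t = cos φ`; it enters the explicit primitive of the airfoil kernel. -/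
def airfoilDenom (t x : ℝ) : ℝ := 1 - x * t + √(1 - x ^ 2) * √(1 - t ^ 2)

lemma continuous_airfoilDenom (t : ℝ) : Continuous (airfoilDenom t) := by
  unfold airfoilDenom
  fun_prop

lemma airfoilDenom_pos (ht : t ∈ Ioo (-1 : ℝ) 1) (hx : x ∈ Icc (-1 : ℝ) 1) :
    0 < airfoilDenom t x := by
  have hxt : |x * t| < 1 := by
    rw [abs_mul]
    nlinarith [abs_nonneg x, abs_nonneg t, abs_le.2 hx, abs_lt.2 ht]
  have : 0 < 1 - x * t := by linarith [(abs_lt.1 hxt).2]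
  unfold airfoilDenom
  positivity

/-- The primitive, vanishing at `±1`, of the airfoil kernel
`x ↦ (1 - x²)^{-1/2} / (x - t)`, on both sides of the pole: `Real.log (x - t)` is `log |x - t|`. -/
def airfoilPrimitive (t x : ℝ) : ℝ :=
  (√(1 - t ^ 2))⁻¹ * (Real.log (x - t) - Real.log (airfoilDenom t x))

lemma airfoilPrimitive_one (t : ℝ) : airfoilPrimitive t 1 = 0 := by
  simp [airfoilPrimitive, airfoilDenom]

lemma airfoilPrimitive_neg_one (t : ℝ) : airfoilPrimitive t (-1) = 0 := by
  have : -1 - t = -(1 + t) := by ring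
  simp [airfoilPrimitive, airfoilDenom, this, -neg_add_rev]

lemma continuousOn_airfoilPrimitive (ht : t ∈ Ioo (-1 : ℝ) 1) {s : Set ℝ}
    (hs : s ⊆ Icc (-1 : ℝ) 1) (hts : t ∉ s) : ContinuousOn (airfoilPrimitive t) s := by
  refine continuousOn_const.mul (ContinuousOn.sub ?_ ?_)
  · exact ContinuousOn.log (by fun_prop)
      fun x hx => sub_ne_zero.2 (ne_of_mem_of_not_mem hx hts)
  · exact (continuous_airfoilDenom t).continuousOn.log
      fun x hx => (airfoilDenom_pos ht (hs hx)).ne'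

lemma hasDerivAt_airfoilDenom (t : ℝ) (hx : x ∈ Ioo (-1 : ℝ) 1) :
    HasDerivAt (airfoilDenom t) (-t - x * airfoilWeight x * √(1 - t ^ 2)) x := by
  have hlin : HasDerivAt (fun x => 1 - x * t) (-t) x := by
    simpa using ((hasDerivAt_id x).mul_const t).const_sub 1
  have hsq : HasDerivAt (fun x => 1 - x ^ 2) (-(2 * x)) x := by
    simpa using ((hasDerivAt_id x).pow 2).const_sub 1
  refine (hlin.add ((hsq.sqrt (one_sub_sq_pos hx).ne').mul_const √(1 - t ^ 2))).congr_deriv ?_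
  unfold airfoilWeight
  ring

lemma hasDerivAt_airfoilPrimitive (ht : t ∈ Ioo (-1 : ℝ) 1) (hx : x ∈ Ioo (-1 : ℝ) 1)
    (hxt : x ≠ t) : HasDerivAt (airfoilPrimitive t) ((x - t)⁻¹ • airfoilWeight x) x := by
  have hD := (airfoilDenom_pos ht (Ioo_subset_Icc_self hx)).ne'
  have hne := sub_ne_zero.2 hxt
  refine ((((hasDerivAt_id x).sub_const t).log hne).sub
    ((hasDerivAt_airfoilDenom t hx).log hD)).const_mul (√(1 - t ^ 2))⁻¹ |>.congr_deriv ?_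
  have hr := (Real.sqrt_pos.2 (one_sub_sq_pos hx)).ne'
  have hs := (Real.sqrt_pos.2 (one_sub_sq_pos ht)).ne'
  have hr2 := Real.sq_sqrt (one_sub_sq_pos hx).le
  have hs2 := Real.sq_sqrt (one_sub_sq_pos ht).le
  unfold airfoilWeight
  rw [id_eq, smul_eq_mul]
  have hDdef : airfoilDenom t x = 1 - x * t + √(1 - x ^ 2) * √(1 - t ^ 2) := rfl
  generalize airfoilDenom t x = D at *
  generalize √(1 - x ^ 2) = r at *
  generalize √(1 - t ^ 2) = s at *
  field_simp
  rw [hDdef]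
  linear_combination s * hr2 - r * hs2

lemma integral_airfoilKernel_eq_sub (ht : t ∈ Ioo (-1 : ℝ) 1) {a b : ℝ} (ha : -1 ≤ a) (hab : a ≤ b)
    (hb : b ≤ 1) (hts : t ∉ Icc a b)
    (hint : IntervalIntegrable (fun x => (x - t)⁻¹ • airfoilWeight x) volume a b) :
    ∫ x in a..b, (x - t)⁻¹ • airfoilWeight x = airfoilPrimitive t b - airfoilPrimitive t a :=
  intervalIntegral.integral_eq_sub_of_hasDerivAt_of_le hab
    (continuousOn_airfoilPrimitive ht (Icc_subset_Icc ha hb) hts)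
    (fun _ hx => hasDerivAt_airfoilPrimitive ht ⟨ha.trans_lt hx.1, hx.2.trans_le hb⟩
      (ne_of_mem_of_not_mem (Ioo_subset_Icc_self hx) hts))
    hint

lemma setOf_mem_Ioo_le_abs_sub {ε : ℝ} (hε : 0 < ε) (hl : -1 < t - ε) (hr : t + ε < 1) :
    {x | ε ≤ |x - t|} ∩ Ioo (-1) 1 = Ioc (-1) (t - ε) ∪ Ico (t + ε) 1 := by
  ext x
  simp only [mem_inter_iff, mem_ofPred_eq, mem_Ioo, mem_union, mem_Ioc, mem_Ico, le_abs]
  grind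

lemma setIntegral_airfoilWeight {ε : ℝ} (ht : t ∈ Ioo (-1 : ℝ) 1) (hε : 0 < ε)
    (hl : -1 < t - ε) (hr : t + ε < 1) :
    ∫ x in {x | ε ≤ |x - t|}, (x - t)⁻¹ • airfoilWeight x ∂μI =
      (√(1 - t ^ 2))⁻¹ *
        (Real.log (airfoilDenom t (t + ε)) - Real.log (airfoilDenom t (t - ε))) := by
  have hint := integrableOn_inv_sub_smul integrable_airfoilWeight t hε
  rw [IntegrableOn, μI, Measure.restrict_restrict (measurableSet_le_abs_sub t ε),
    setOf_mem_Ioo_le_abs_sub hε hl hr] at hint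
  have hintl := IntegrableOn.mono_set hint subset_union_left
  have hintr := IntegrableOn.mono_set hint subset_union_right
  have hdisj : Disjoint (Ioc (-1) (t - ε)) (Ico (t + ε) 1) :=
    disjoint_left.2 fun x hx hx' => by linarith [hx.2, hx'.1]
  have hleft := integral_airfoilKernel_eq_sub ht (a := -1) (b := t - ε) (by linarith) hl.le
    (by linarith) (fun h => by linarith [h.2])
    ((intervalIntegrable_iff_integrableOn_Ioc_of_le hl.le).2 hintl)
  have hright := integral_airfoilKernel_eq_sub ht (a := t + ε) (b := 1) (by linarith) hr.le
    le_rfl (fun h => by linarith [h.1])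
    ((intervalIntegrable_iff_integrableOn_Ico_of_le hr.le).2 hintr)
  rw [μI, Measure.restrict_restrict (measurableSet_le_abs_sub t ε),
    setOf_mem_Ioo_le_abs_sub hε hl hr, setIntegral_union hdisj measurableSet_Ico hintl hintr,
    integral_Ico_eq_integral_Ioo, ← integral_Ioc_eq_integral_Ioo,
    ← intervalIntegral.integral_of_le hl.le, ← intervalIntegral.integral_of_le hr.le,
    hleft, hright, airfoilPrimitive_one, airfoilPrimitive_neg_one]
  simp only [airfoilPrimitive, sub_sub_cancel_left, add_sub_cancel_left, Real.log_neg_eq_log]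
  ring

lemma hasPrincipalValue_airfoilWeight (ht : t ∈ Ioo (-1 : ℝ) 1) :
    HasPrincipalValue μI airfoilWeight t 0 := by
  have hlim : Tendsto (fun ε => (√(1 - t ^ 2))⁻¹ *
      (Real.log (airfoilDenom t (t + ε)) - Real.log (airfoilDenom t (t - ε)))) (𝓝 0) (𝓝 0) := by
    have hD := (airfoilDenom_pos ht (Ioo_subset_Icc_self ht)).ne'
    have hc := continuous_airfoilDenom t
    have hcont : ContinuousAt (fun ε => (√(1 - t ^ 2))⁻¹ *
        (Real.log (airfoilDenom t (t + ε)) - Real.log (airfoilDenom t (t - ε)))) 0 := by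
      refine continuousAt_const.mul (ContinuousAt.sub ?_ ?_)
      · exact ContinuousAt.log (by fun_prop) (by simpa using hD)
      · exact ContinuousAt.log (by fun_prop) (by simpa using hD)
    simpa [ContinuousAt] using hcont
  refine (hlim.mono_left nhdsWithin_le_nhds).congr' ?_
  filter_upwards [self_mem_nhdsWithin,
    mem_nhdsWithin_of_mem_nhds (Iio_mem_nhds (show 0 < t + 1 by linarith [ht.1])),
    mem_nhdsWithin_of_mem_nhds (Iio_mem_nhds (show 0 < 1 - t by linarith [ht.2]))]
    with ε hε hl hr
  exact (setIntegral_airfoilWeight ht hε (by linarith [mem_Iio.1 hl])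
    (by linarith [mem_Iio.1 hr])).symm

end AirfoilWeight

section PolynomialsInRange

variable {t : ℝ}

lemma integrable_eval_mul_airfoilWeight (q : ℝ[X]) :
    Integrable (fun x => q.eval x * airfoilWeight x) μI := by
  obtain ⟨C, hC⟩ := isCompact_Icc.exists_bound_of_continuousOn
    (q.continuous.continuousOn (s := Icc (-1) 1))
  exact integrable_airfoilWeight.bdd_mul q.continuous.aestronglyMeasurable
    (ae_restrict_of_forall_mem measurableSet_Ioo fun x hx => hC x (Ioo_subset_Icc_self hx))

instance : NullSingletonClass μI := inferInstanceAs (NullSingletonClass (volume.restrict _))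

lemma hasPrincipalValue_mul_airfoilWeight (ht : t ∈ Ioo (-1 : ℝ) 1) :
    HasPrincipalValue μI (fun x => x * airfoilWeight x) t π := by
  simpa [integral_airfoilWeight] using
    (hasPrincipalValue_airfoilWeight ht).id_smul integrable_airfoilWeight

lemma exists_polynomial_hasPrincipalValue_pow (n : ℕ) : ∃ q : ℝ[X], ∀ t ∈ Ioo (-1 : ℝ) 1,
    HasPrincipalValue μI (fun x => q.eval x * airfoilWeight x) t (t ^ n) := by
  have hone : ∀ c : ℝ, ∀ t ∈ Ioo (-1 : ℝ) 1, HasPrincipalValue μI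
      (fun x => (Polynomial.C (c / π) * Polynomial.X).eval x * airfoilWeight x) t c := by
    intro c t ht
    have h := (hasPrincipalValue_mul_airfoilWeight ht).clm_comp
      (ContinuousLinearMap.mul ℝ ℝ (c / π)) (by
        simpa using integrable_eval_mul_airfoilWeight Polynomial.X)
    simpa [mul_assoc, Real.pi_ne_zero] using h
  induction n with
  | zero => exact ⟨_, by simpa only [pow_zero] using hone 1⟩
  | succ n ih =>
    obtain ⟨q, hq⟩ := ih
    set c := ∫ x, q.eval x * airfoilWeight x ∂μI
    refine ⟨Polynomial.X * q + Polynomial.C (-c / π) * Polynomial.X, fun t ht => ?_⟩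
    have hXq : Integrable (fun x => x • (q.eval x * airfoilWeight x)) μI := by
      have h := integrable_eval_mul_airfoilWeight (Polynomial.X * q)
      simpa only [Polynomial.eval_mul, Polynomial.eval_X, mul_assoc, smul_eq_mul] using h
    have h := HasPrincipalValue.add hXq (integrable_eval_mul_airfoilWeight _)
      ((hq t ht).id_smul (integrable_eval_mul_airfoilWeight q)) (hone (-c) t ht)
    convert h using 1
    · funext x
      simp [add_mul, mul_assoc]
    · simp [c, pow_succ']

lemma exists_polynomial_hasPrincipalValue (p : ℝ[X]) : ∃ q : ℝ[X], ∀ t ∈ Ioo (-1 : ℝ) 1,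
    HasPrincipalValue μI (fun x => q.eval x * airfoilWeight x) t (p.eval t) := by
  induction p using Polynomial.induction_on' with
  | add p₁ p₂ h₁ h₂ =>
    obtain ⟨q₁, h₁⟩ := h₁
    obtain ⟨q₂, h₂⟩ := h₂
    refine ⟨q₁ + q₂, fun t ht => ?_⟩
    simpa [add_mul] using (h₁ t ht).add (integrable_eval_mul_airfoilWeight q₁)
      (integrable_eval_mul_airfoilWeight q₂) (h₂ t ht)
  | monomial n a =>
    obtain ⟨q, hq⟩ := exists_polynomial_hasPrincipalValue_pow n
    refine ⟨Polynomial.C a * q, fun t ht => ?_⟩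
    simpa [mul_assoc] using (hq t ht).clm_comp (ContinuousLinearMap.mul ℝ ℝ a)
      (integrable_eval_mul_airfoilWeight q)

end PolynomialsInRange

section Density

variable {f : ℝ → ℂ}

lemma mul_max_log_zero_le {a : ℝ} (ha : 0 ≤ a) :
    a * max (Real.log a) 0 ≤ 2 * a ^ (3 / 2 : ℝ) := by
  have hlog : max (Real.log a) 0 ≤ 2 * a ^ (1 / 2 : ℝ) := by
    refine max_le ?_ (by positivity)
    linarith [Real.log_le_rpow_div ha (show (0 : ℝ) < 1 / 2 by norm_num)]
  calc a * max (Real.log a) 0 ≤ a * (2 * a ^ (1 / 2 : ℝ)) := by gcongr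
    _ = 2 * a ^ (1 + 1 / 2 : ℝ) := by
      rw [Real.rpow_add' ha (by norm_num), Real.rpow_one]
      ring
    _ = 2 * a ^ (3 / 2 : ℝ) := by norm_num

lemma memLlogL_of_norm_le_airfoilWeight (hf : AEStronglyMeasurable f μI) {C : ℝ} (hC : 0 ≤ C)
    (hfC : ∀ x ∈ Ioo (-1 : ℝ) 1, ‖f x‖ ≤ C * airfoilWeight x) : MemLlogL f := by
  have hmeas := hf.norm.aemeasurable
  refine ⟨hf, ((integrableOn_one_sub_sq_rpow (s := -(3 / 4)) (by norm_num)
    (by norm_num)).const_mul (2 * C ^ (3 / 2 : ℝ))).mono'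
    (hmeas.mul ((Real.measurable_log.comp_aemeasurable hmeas).max
      aemeasurable_const)).aestronglyMeasurable ?_⟩
  refine ae_restrict_of_forall_mem measurableSet_Ioo fun x hx => ?_
  rw [Real.norm_of_nonneg (mul_nonneg (norm_nonneg _) (le_max_right _ _))]
  calc ‖f x‖ * max (Real.log ‖f x‖) 0 ≤ 2 * ‖f x‖ ^ (3 / 2 : ℝ) :=
        mul_max_log_zero_le (norm_nonneg _)
    _ ≤ 2 * (C * airfoilWeight x) ^ (3 / 2 : ℝ) := by gcongr; exact hfC x hx
    _ = 2 * C ^ (3 / 2 : ℝ) * (1 - x ^ 2) ^ (-(3 / 4) : ℝ) := by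
      rw [Real.mul_rpow hC (airfoilWeight_nonneg x), airfoilWeight_rpow hx]
      norm_num [mul_assoc]

lemma setIntegral_div_ofReal_sub (f : ℝ → ℂ) (t ε : ℝ) :
    ∫ x in {x : ℝ | x ∈ Ioo (-1 : ℝ) 1 ∧ ε ≤ |x - t|}, f x / ((x : ℂ) - (t : ℂ)) =
      ∫ x in {x | ε ≤ |x - t|}, (x - t)⁻¹ • f x ∂μI := by
  rw [μI, Measure.restrict_restrict (measurableSet_le_abs_sub t ε), inter_comm]
  simp only [Complex.real_smul, Complex.ofReal_inv, Complex.ofReal_sub, div_eq_inv_mul]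
  rfl

lemma HasPrincipalValue.FHT_eq {t : ℝ} {L : ℂ} (h : HasPrincipalValue μI f t L) :
    FHT f t = (π : ℂ)⁻¹ * L := by
  refine Tendsto.limUnder_eq (Tendsto.const_mul _ ?_)
  simpa only [setIntegral_div_ofReal_sub] using! h

lemma exists_memLlogL_FHT_eq_eval (p q : ℝ[X]) : ∃ f, MemLlogL f ∧
    ∀ t ∈ Ioo (-1 : ℝ) 1, FHT f t = ((p.eval t : ℝ) : ℂ) + ((q.eval t : ℝ) : ℂ) * Complex.I := by
  obtain ⟨u, hu⟩ := exists_polynomial_hasPrincipalValue (Polynomial.C π * p)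
  obtain ⟨v, hv⟩ := exists_polynomial_hasPrincipalValue (Polynomial.C π * q)
  have hui := integrable_eval_mul_airfoilWeight u
  have hvi := integrable_eval_mul_airfoilWeight v
  obtain ⟨A, hA⟩ := isCompact_Icc.exists_bound_of_continuousOn
    (u.continuous.continuousOn (s := Icc (-1) 1))
  obtain ⟨B, hB⟩ := isCompact_Icc.exists_bound_of_continuousOn
    (v.continuous.continuousOn (s := Icc (-1) 1))
  let toImaginary := ContinuousLinearMap.toSpanSingleton ℝ Complex.I
  refine ⟨fun x => Complex.ofRealCLM (u.eval x * airfoilWeight x) +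
    toImaginary (v.eval x * airfoilWeight x), ?_, fun t ht => ?_⟩
  · refine memLlogL_of_norm_le_airfoilWeight (C := |A| + |B|)
      ((Complex.ofRealCLM.integrable_comp hui).add
        (toImaginary.integrable_comp hvi)).aestronglyMeasurable (by positivity) fun x hx => ?_
    refine (norm_add_le _ _).trans ?_
    have hx' := Ioo_subset_Icc_self hx
    have hw := airfoilWeight_nonneg x
    simp only [toImaginary, Complex.ofRealCLM_apply, Complex.norm_real, norm_mul, norm_smul,
      ContinuousLinearMap.toSpanSingleton_apply, Complex.norm_I, mul_one, Real.norm_of_nonneg hw]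
    rw [add_mul]
    gcongr
    exacts [(hA x hx').trans (le_abs_self A), (hB x hx').trans (le_abs_self B)]
  · rw [(((hu t ht).clm_comp Complex.ofRealCLM hui).add (Complex.ofRealCLM.integrable_comp hui)
      (toImaginary.integrable_comp hvi) ((hv t ht).clm_comp toImaginary hvi)).FHT_eq]
    have hpi : (π : ℂ) ≠ 0 := Complex.ofReal_ne_zero.2 Real.pi_ne_zero
    simp only [toImaginary, Complex.ofRealCLM_apply, ContinuousLinearMap.toSpanSingleton_apply,
      Polynomial.eval_mul, Polynomial.eval_C, Complex.ofReal_mul, Complex.real_smul]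
    field_simp

lemma exists_polynomials_near {k : ℝ → ℂ} (hk : Continuous k) {ε : ℝ} (hε : 0 < ε) :
    ∃ p q : ℝ[X], ∀ t ∈ Icc (-1 : ℝ) 1,
      ‖((p.eval t : ℝ) : ℂ) + ((q.eval t : ℝ) : ℂ) * Complex.I - k t‖ ≤ ε := by
  obtain ⟨p, hp⟩ := exists_polynomial_near_of_continuousOn (-1) 1 (fun t => (k t).re)
    (by fun_prop) (ε / 2) (by positivity)
  obtain ⟨q, hq⟩ := exists_polynomial_near_of_continuousOn (-1) 1 (fun t => (k t).im)
    (by fun_prop) (ε / 2) (by positivity)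
  refine ⟨p, q, fun t ht => (Complex.norm_le_abs_re_add_abs_im _).trans ?_⟩
  simpa using (add_lt_add (hp t ht) (hq t ht)).le.trans_eq (add_halves ε)

theorem exists_memLlogL_integral_norm_FHT_sub_lt {g : ℝ → ℂ} (hg : IntegrableOn g (Ioo (-1) 1))
    {ε : ℝ} (hε : 0 < ε) :
    ∃ f, MemLlogL f ∧ ∫ x in Ioo (-1 : ℝ) 1, ‖FHT f x - g x‖ < ε := by
  obtain ⟨k, -, hgk, hk, hki⟩ :=
    Integrable.exists_hasCompactSupport_integral_sub_le hg (show 0 < ε / 2 by positivity)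
  obtain ⟨p, q, hpq⟩ := exists_polynomials_near hk (show 0 < ε / 8 by positivity)
  obtain ⟨f, hf, hFHT⟩ := exists_memLlogL_FHT_eq_eval p q
  have hgki : IntegrableOn (fun x => ‖g x - k x‖) (Ioo (-1) 1) := (hg.sub hki).norm
  refine ⟨f, hf, ?_⟩
  calc ∫ x in Ioo (-1 : ℝ) 1, ‖FHT f x - g x‖
      ≤ ∫ x in Ioo (-1 : ℝ) 1, (ε / 8 + ‖g x - k x‖) := by
        refine integral_mono_of_nonneg (.of_forall fun x => norm_nonneg _)
          ((integrable_const _).add hgki)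
          (ae_restrict_of_forall_mem measurableSet_Ioo fun x hx => ?_)
        simp only [hFHT x hx]
        refine (norm_sub_le_norm_sub_add_norm_sub _ (k x) _).trans ?_
        rw [norm_sub_rev (k x)]
        exact add_le_add_left (hpq x (Ioo_subset_Icc_self hx)) _
    _ = ε / 4 + ∫ x in Ioo (-1 : ℝ) 1, ‖g x - k x‖ := by
        rw [integral_add (integrable_const _) hgki, setIntegral_const,
          Real.volume_real_Ioo_of_le (by norm_num), smul_eq_mul]
        ring
    _ < ε := by linarith

end Density

section Kernels

variable {ε : ℝ}

/-- The conjugate Poisson kernel of the upper half-plane at height `ε`, up to the factor `π⁻¹`. -/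
def conjPoissonKer (ε u : ℝ) : ℝ := u / (u ^ 2 + ε ^ 2)

/-- The Poisson kernel of the upper half-plane at height `ε`, up to the factor `π⁻¹`. -/
def poissonKer (ε u : ℝ) : ℝ := ε / (u ^ 2 + ε ^ 2)

lemma conjPoissonKer_neg (ε u : ℝ) : conjPoissonKer ε (-u) = -conjPoissonKer ε u := by
  simp [conjPoissonKer, neg_div]

lemma poissonKer_neg (ε u : ℝ) : poissonKer ε (-u) = poissonKer ε u := by
  simp [poissonKer]

lemma measurable_conjPoissonKer (ε : ℝ) : Measurable (conjPoissonKer ε) := by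
  unfold conjPoissonKer
  fun_prop

lemma poissonKer_nonneg (hε : 0 < ε) (u : ℝ) : 0 ≤ poissonKer ε u := by
  unfold poissonKer
  positivity

lemma abs_conjPoissonKer_le (hε : 0 < ε) (u : ℝ) : |conjPoissonKer ε u| ≤ ε⁻¹ := by
  rw [conjPoissonKer, abs_div, abs_of_pos (show 0 < u ^ 2 + ε ^ 2 by positivity),
    div_le_iff₀ (by positivity), inv_mul_eq_div, le_div_iff₀ hε, ← sq_abs u]
  nlinarith [sq_nonneg (|u| - ε)]

lemma measurable_poissonKer (ε : ℝ) : Measurable (poissonKer ε) := by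
  unfold poissonKer
  fun_prop

lemma abs_poissonKer_le (hε : 0 < ε) (u : ℝ) : |poissonKer ε u| ≤ ε⁻¹ := by
  rw [abs_of_nonneg (poissonKer_nonneg hε u), poissonKer, div_le_iff₀ (by positivity),
    inv_mul_eq_div, le_div_iff₀ hε]
  nlinarith [sq_nonneg u]

lemma poissonKer_eq_cauchyPDFReal (hε : 0 < ε) (u : ℝ) :
    poissonKer ε u = π * ProbabilityTheory.cauchyPDFReal 0 (.mk ε hε.le) u := by
  rw [ProbabilityTheory.cauchyPDFReal_def, NNReal.coe_mk, sub_zero, poissonKer]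
  field_simp

lemma integrable_poissonKer (hε : 0 < ε) : Integrable (poissonKer ε) := by
  simp only [funext (poissonKer_eq_cauchyPDFReal hε)]
  exact (ProbabilityTheory.integrable_cauchyPDFReal 0).const_mul π

lemma integral_poissonKer (hε : 0 < ε) : ∫ u, poissonKer ε u = π := by
  simp only [poissonKer_eq_cauchyPDFReal hε]
  rw [integral_const_mul, ProbabilityTheory.integral_cauchyPDFReal_eq_one, mul_one]
  exact fun h => hε.ne' (congrArg NNReal.toReal h)

end Kernels

section CauchyTransform

variable {f : ℝ → ℝ} {z : ℂ} {ε : ℝ}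

/-- The Cauchy transform `z ↦ ∫ f(x) / (x - z) dx` of `f`. At `t + iε` its real part is the
truncated Hilbert transform of `f` smoothed at scale `ε`, and its imaginary part the Poisson
integral of `f`. -/
def cauchyTransform (f : ℝ → ℝ) (z : ℂ) : ℂ := ∫ x : ℝ, (f x : ℂ) / ((x : ℂ) - z)

lemma abs_im_le_norm_ofReal_sub (x : ℝ) (z : ℂ) : |z.im| ≤ ‖(x : ℂ) - z‖ := by
  simpa using Complex.abs_im_le_norm ((x : ℂ) - z)

lemma ofReal_sub_ne_zero_of_im_pos (x : ℝ) (hz : 0 < z.im) : (x : ℂ) - z ≠ 0 :=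
  norm_pos_iff.1 (((abs_pos.2 hz.ne').trans_le (abs_im_le_norm_ofReal_sub x z)))

lemma integrable_div_ofReal_sub (hf : Integrable f) (hz : 0 < z.im) :
    Integrable fun x : ℝ => (f x : ℂ) / ((x : ℂ) - z) := by
  simp only [div_eq_mul_inv]
  refine hf.ofReal.mul_bdd (c := |z.im|⁻¹)
    (Measurable.aestronglyMeasurable (by fun_prop)) (.of_forall fun x => ?_)
  rw [norm_inv]
  exact inv_anti₀ (abs_pos.2 hz.ne') (abs_im_le_norm_ofReal_sub x z)

lemma norm_cauchyTransform_le (hf : Integrable f) {d : ℝ} (hd : 0 < d)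
    (hfd : ∀ x, f x ≠ 0 → d ≤ ‖(x : ℂ) - z‖) : ‖cauchyTransform f z‖ ≤ (∫ x, |f x|) / d := by
  rw [← integral_div]
  refine norm_integral_le_of_norm_le (hf.abs.div_const d) (.of_forall fun x => ?_)
  rw [norm_div, Complex.norm_real, Real.norm_eq_abs]
  by_cases hx : f x = 0
  · simp [hx]
  · gcongr
    exact hfd x hx

lemma differentiableAt_cauchyTransform (hf : Integrable f) (hz : 0 < z.im) :
    DifferentiableAt ℂ (cauchyTransform f) z := by
  have hpos : 0 < z.im / 2 := half_pos hz
  have hU : {w : ℂ | z.im / 2 < w.im} ∈ 𝓝 z :=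
    (isOpen_lt continuous_const Complex.continuous_im).mem_nhds (half_lt_self hz)
  refine (hasDerivAt_integral_of_dominated_loc_of_deriv_le (𝕜 := ℂ)
    (F := fun w x => (f x : ℂ) / ((x : ℂ) - w)) (F' := fun w x => (f x : ℂ) / ((x : ℂ) - w) ^ 2)
    (bound := fun x => |f x| / (z.im / 2) ^ 2) hU ?_ (integrable_div_ofReal_sub hf hz) ?_
    (.of_forall fun x w hw => ?_) (hf.abs.div_const _)
    (.of_forall fun x w hw => ?_)).2.differentiableAt
  · filter_upwards [hU] with w hw
    exact (integrable_div_ofReal_sub hf (hpos.trans hw)).aestronglyMeasurable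
  · exact hf.ofReal.aestronglyMeasurable.div₀ (Measurable.aestronglyMeasurable (by fun_prop))
  · have hxw : z.im / 2 ≤ ‖(x : ℂ) - w‖ :=
      (mem_ofPred.1 hw).le.trans ((le_abs_self _).trans (abs_im_le_norm_ofReal_sub x w))
    rw [norm_div, Complex.norm_real, norm_pow, Real.norm_eq_abs]
    gcongr
  · have hne := ofReal_sub_ne_zero_of_im_pos x (hpos.trans hw)
    simp only [div_eq_mul_inv]
    refine ((((hasDerivAt_id w).const_sub (x : ℂ)).inv hne).const_mul (f x : ℂ)).congr_deriv ?_
    simp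

lemma continuous_cauchyTransform_add_mul_I (hf : Integrable f) (hε : 0 < ε) :
    Continuous fun t : ℝ => cauchyTransform f (t + ε * I) :=
  continuous_iff_continuousAt.2 fun t =>
    ContinuousAt.comp (g := cauchyTransform f) (f := fun t : ℝ => (t + ε * I : ℂ))
      (differentiableAt_cauchyTransform hf (by simpa using hε)).continuousAt (by fun_prop)

end CauchyTransform

section PoissonIntegrals

variable {f h : ℝ → ℝ} {ε : ℝ}

/-- The conjugate Poisson integral of `f` at height `ε`, without the factor `π⁻¹`: a smoothing of
the Hilbert transform at scale `ε`. -/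
def conjPoissonIntegral (ε : ℝ) (f : ℝ → ℝ) (t : ℝ) : ℝ := ∫ x, f x * conjPoissonKer ε (x - t)

/-- The Poisson integral of `f` at height `ε`, without the factor `π⁻¹`. -/
def poissonIntegral (ε : ℝ) (f : ℝ → ℝ) (t : ℝ) : ℝ := ∫ x, f x * poissonKer ε (x - t)

lemma integrable_mul_conjPoissonKer (hf : Integrable f) (hε : 0 < ε) (t : ℝ) :
    Integrable fun x => f x * conjPoissonKer ε (x - t) :=
  hf.mul_bdd ((measurable_conjPoissonKer ε).comp (measurable_sub_const t)).aestronglyMeasurable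
    (.of_forall fun _ => abs_conjPoissonKer_le hε _)

lemma integrable_mul_poissonKer (hf : Integrable f) (hε : 0 < ε) (t : ℝ) :
    Integrable fun x => f x * poissonKer ε (x - t) :=
  hf.mul_bdd ((measurable_poissonKer ε).comp (measurable_sub_const t)).aestronglyMeasurable
    (.of_forall fun _ => abs_poissonKer_le hε _)

lemma inv_ofReal_sub_add_mul_I (x t ε : ℝ) :
    ((x : ℂ) - (t + ε * I))⁻¹ = conjPoissonKer ε (x - t) + poissonKer ε (x - t) * I := by
  rw [Complex.inv_def]
  apply Complex.ext <;>
    simp [Complex.normSq_apply, conjPoissonKer, poissonKer, div_eq_mul_inv, sq]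

lemma cauchyTransform_add_mul_I (hf : Integrable f) (hε : 0 < ε) (t : ℝ) :
    cauchyTransform f (t + ε * I) = conjPoissonIntegral ε f t + poissonIntegral ε f t * I := by
  rw [conjPoissonIntegral, poissonIntegral, ← integral_complex_ofReal, ← integral_complex_ofReal,
    ← integral_mul_const, ← integral_add]
  · refine integral_congr_ae (.of_forall fun x => ?_)
    beta_reduce
    rw [div_eq_mul_inv, inv_ofReal_sub_add_mul_I]
    push_cast
    ring
  · exact (integrable_mul_conjPoissonKer hf hε t).ofReal
  · exact (integrable_mul_poissonKer hf hε t).ofReal.mul_const I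

lemma cauchyTransform_re (hf : Integrable f) (hε : 0 < ε) (t : ℝ) :
    (cauchyTransform f (t + ε * I)).re = conjPoissonIntegral ε f t := by
  simp [cauchyTransform_add_mul_I hf hε]

lemma cauchyTransform_im (hf : Integrable f) (hε : 0 < ε) (t : ℝ) :
    (cauchyTransform f (t + ε * I)).im = poissonIntegral ε f t := by
  simp [cauchyTransform_add_mul_I hf hε]

lemma continuous_conjPoissonIntegral (hf : Integrable f) (hε : 0 < ε) :
    Continuous (conjPoissonIntegral ε f) := by
  simp only [← funext (cauchyTransform_re hf hε)]
  exact Complex.continuous_re.comp (continuous_cauchyTransform_add_mul_I hf hε)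

lemma continuous_poissonIntegral (hf : Integrable f) (hε : 0 < ε) :
    Continuous (poissonIntegral ε f) := by
  simp only [← funext (cauchyTransform_im hf hε)]
  exact Complex.continuous_im.comp (continuous_cauchyTransform_add_mul_I hf hε)

lemma integral_mul_conjPoissonIntegral (hf : Integrable f) (hh : Integrable h) (hε : 0 < ε) :
    ∫ t, h t * conjPoissonIntegral ε f t = -∫ x, f x * conjPoissonIntegral ε h x := by
  have hint : Integrable (fun p : ℝ × ℝ => h p.1 * f p.2 * conjPoissonKer ε (p.2 - p.1))
      (volume.prod volume) :=
    (hh.mul_prod hf).mul_bdd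
      ((measurable_conjPoissonKer ε).comp (by fun_prop)).aestronglyMeasurable
      (.of_forall fun _ => abs_conjPoissonKer_le hε _)
  calc ∫ t, h t * conjPoissonIntegral ε f t
      = ∫ t, ∫ x, h t * f x * conjPoissonKer ε (x - t) := by
        simp only [conjPoissonIntegral, ← integral_const_mul, mul_assoc]
    _ = ∫ x, ∫ t, h t * f x * conjPoissonKer ε (x - t) := integral_integral_swap hint
    _ = -∫ x, f x * conjPoissonIntegral ε h x := by
        rw [← integral_neg]
        simp only [conjPoissonIntegral, ← integral_const_mul, ← integral_neg]
        refine integral_congr_ae (.of_forall fun x => integral_congr_ae (.of_forall fun t => ?_))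
        beta_reduce
        rw [← neg_sub t x, conjPoissonKer_neg]
        ring

lemma abs_poissonIntegral_le (hε : 0 < ε) {c : ℝ} (hhc : ∀ x, |h x| ≤ c) (t : ℝ) :
    |poissonIntegral ε h t| ≤ c * π := by
  rw [← integral_poissonKer hε, ← integral_sub_right_eq_self (poissonKer ε) t,
    ← integral_const_mul, poissonIntegral, ← Real.norm_eq_abs]
  refine norm_integral_le_of_norm_le
    (((integrable_poissonKer hε).comp_sub_right t).const_mul c) (.of_forall fun x => ?_)
  rw [norm_mul, Real.norm_of_nonneg (poissonKer_nonneg hε _)]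
  exact mul_le_mul_of_nonneg_right (hhc x) (poissonKer_nonneg hε _)

lemma integrable_prod_mul_poissonKer (hf : Integrable f) (hε : 0 < ε) :
    Integrable (fun p : ℝ × ℝ => f p.2 * poissonKer ε (p.1 - p.2)) (volume.prod volume) :=
  hf.convolution_integrand (ContinuousLinearMap.mul ℝ ℝ) (integrable_poissonKer hε)

lemma poissonIntegral_eq (ε : ℝ) (f : ℝ → ℝ) (t : ℝ) :
    poissonIntegral ε f t = ∫ x, f x * poissonKer ε (t - x) := by
  simp only [poissonIntegral, ← poissonKer_neg ε (t - _), neg_sub]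

lemma integrable_poissonIntegral (hf : Integrable f) (hε : 0 < ε) :
    Integrable (poissonIntegral ε f) := by
  simp only [funext (poissonIntegral_eq ε f)]
  exact (integrable_prod_mul_poissonKer hf hε).integral_prod_left

lemma integral_abs_poissonIntegral_le (hf : Integrable f) (hε : 0 < ε) :
    ∫ t, |poissonIntegral ε f t| ≤ π * ∫ x, |f x| := by
  have hint := integrable_prod_mul_poissonKer hf.abs hε
  calc ∫ t, |poissonIntegral ε f t|
      ≤ ∫ t, ∫ x, |f x| * poissonKer ε (t - x) := by
        refine integral_mono (integrable_poissonIntegral hf hε).abs hint.integral_prod_left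
          fun t => ?_
        simp only [poissonIntegral_eq]
        refine (abs_integral_le_integral_abs).trans_eq ?_
        simp only [abs_mul, abs_of_nonneg (poissonKer_nonneg hε _)]
    _ = ∫ x, ∫ t, |f x| * poissonKer ε (t - x) := integral_integral_swap hint
    _ = π * ∫ x, |f x| := by
        simp only [integral_const_mul, integral_sub_right_eq_self (poissonKer ε),
          integral_poissonKer hε, mul_comm]

end PoissonIntegrals

section RectangleContour

variable {K : ℂ → ℂ} {a b c d C : ℝ}

lemma norm_integral_bottom_side_le (hab : a ≤ b) (hcd : c ≤ d)
    (hK : DifferentiableOn ℂ K (Icc a b ×ℂ Icc c d))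
    (hC : ∀ z ∈ Icc a b ×ℂ Icc c d, z.re = a ∨ z.re = b ∨ z.im = d → ‖K z‖ ≤ C) :
    ‖∫ t in a..b, K (t + c * I)‖ ≤ (b - a + 2 * (d - c)) * C := by
  have hrect := Complex.integral_boundary_rect_eq_zero_of_differentiableOn K ⟨a, c⟩ ⟨b, d⟩
    (by simpa only [uIcc_of_le hab, uIcc_of_le hcd] using hK)
  have htop : ‖∫ t in a..b, K (t + d * I)‖ ≤ C * |b - a| := by
    refine intervalIntegral.norm_integral_le_of_norm_le_const fun t ht => hC _ ?_ ?_
    · rw [uIoc_of_le hab] at ht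
      simp [Complex.mem_reProdIm, ht.1.le, ht.2, hcd]
    · simp
  have hside : ∀ e, e = a ∨ e = b → ‖∫ s in c..d, K (e + s * I)‖ ≤ C * |d - c| := by
    intro e he
    refine intervalIntegral.norm_integral_le_of_norm_le_const fun s hs => hC _ ?_ ?_
    · rw [uIoc_of_le hcd] at hs
      rcases he with rfl | rfl <;> simp [Complex.mem_reProdIm, hs.1.le, hs.2, hab]
    · rcases he with rfl | rfl <;> simp
  have hbottom : ∫ t in a..b, K (t + c * I) = (∫ t in a..b, K (t + d * I))
      - I • (∫ s in c..d, K (b + s * I)) + I • ∫ s in c..d, K (a + s * I) := by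
    linear_combination hrect
  calc ‖∫ t in a..b, K (t + c * I)‖
      ≤ C * |b - a| + C * |d - c| + C * |d - c| := by
        rw [hbottom]
        refine norm_add_le_of_le (norm_sub_le_of_le htop ?_) ?_
        · simpa [norm_smul] using hside b (.inr rfl)
        · simpa [norm_smul] using hside a (.inl rfl)
    _ = (b - a + 2 * (d - c)) * C := by
        rw [abs_of_nonneg (sub_nonneg.2 hab), abs_of_nonneg (sub_nonneg.2 hcd)]
        ring

end RectangleContour

section CoshBound

variable {f h : ℝ → ℝ} {a ε : ℝ}

lemma norm_cauchyTransform_le_integral_abs (hf : Integrable f) (hfa : ∀ x, f x ≠ 0 → |x| ≤ a)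
    {z : ℂ} (hz : a + 1 ≤ |z.re| ∨ 1 ≤ z.im) : ‖cauchyTransform f z‖ ≤ ∫ x, |f x| := by
  refine (norm_cauchyTransform_le hf one_pos fun x hx => ?_).trans_eq (div_one _)
  rcases hz with hz | hz
  · have hre : |z.re| - |x| ≤ |x - z.re| := by
      simpa [abs_sub_comm] using abs_sub_abs_le_abs_sub z.re x
    have hnorm : |x - z.re| ≤ ‖(x : ℂ) - z‖ := by
      simpa using Complex.abs_re_le_norm ((x : ℂ) - z)
    linarith [hfa x hx]
  · exact hz.trans ((le_abs_self _).trans (abs_im_le_norm_ofReal_sub x z))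

lemma norm_cosh_sub_one_le {w : ℂ} (hw : ‖w‖ ≤ 1) : ‖Complex.cosh w - 1‖ ≤ ‖w‖ ^ 2 := by
  have hsplit : Complex.cosh w - 1 =
      ((Complex.exp w - 1 - w) + (Complex.exp (-w) - 1 - -w)) / 2 := by
    rw [Complex.cosh]
    ring
  have hexp := Complex.norm_exp_sub_one_sub_id_le hw
  have hexp_neg := Complex.norm_exp_sub_one_sub_id_le (x := -w) (by simpa using hw)
  rw [norm_neg] at hexp_neg
  rw [hsplit, norm_div, Complex.norm_two]
  linarith [norm_add_le (Complex.exp w - 1 - w) (Complex.exp (-w) - 1 - -w)]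

lemma re_cosh_add_mul_I (q p : ℝ) :
    (Complex.cosh (q + p * I)).re = Real.cosh q * Real.cos p := by
  rw [Complex.cosh_add, Complex.cosh_mul_I, Complex.sinh_mul_I]
  norm_cast
  simp [← mul_assoc, Complex.cos_ofReal_re]

lemma half_cosh_sub_one_sub_le {q p : ℝ} (hp : |p| ≤ 1) :
    (Real.cosh q - 1 - |p|) / 2 ≤ (Complex.cosh (q + p * I) - 1).re := by
  have hcos := Real.one_sub_sq_div_two_le_cos (x := p)
  have hsq : p ^ 2 ≤ |p| := by
    rw [← sq_abs]
    nlinarith [abs_nonneg p]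
  rw [Complex.sub_re, Complex.one_re, re_cosh_add_mul_I]
  nlinarith [Real.one_le_cosh q, abs_nonneg p]

lemma norm_integral_cosh_cauchyTransform_sub_one_le (hh : Integrable h) (ha : 0 ≤ a)
    (hha : ∀ x, h x ≠ 0 → |x| ≤ a) (hh1 : ∫ x, |h x| ≤ 1) (hε : 0 < ε) :
    ‖∫ t in (-(a + 1))..(a + 1), (Complex.cosh (cauchyTransform h (t + ε * I)) - 1)‖
      ≤ (2 * a + 4) * ∫ x, |h x| := by
  refine (norm_integral_bottom_side_le (K := fun z => Complex.cosh (cauchyTransform h z) - 1)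
    (d := ε + 1) (C := ∫ x, |h x|) (by linarith) (by linarith) (fun z hz => ?_)
    fun z _ hside => ?_).trans_eq (by ring)
  · exact ((differentiableAt_cauchyTransform hh (hε.trans_le hz.2.1)).ccosh.sub_const
      1).differentiableWithinAt
  · have hnorm : ‖cauchyTransform h z‖ ≤ ∫ x, |h x| := by
      refine norm_cauchyTransform_le_integral_abs hh hha ?_
      rcases hside with hz' | hz' | hz'
      · exact .inl (by rw [hz', abs_neg, abs_of_nonneg (by linarith)])
      · exact .inl (by rw [hz', abs_of_nonneg (by linarith)])
      · exact .inr (by linarith)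
    calc ‖Complex.cosh (cauchyTransform h z) - 1‖
        ≤ ‖cauchyTransform h z‖ ^ 2 := norm_cosh_sub_one_le (hnorm.trans hh1)
      _ ≤ ‖cauchyTransform h z‖ := by nlinarith [norm_nonneg (cauchyTransform h z)]
      _ ≤ ∫ x, |h x| := hnorm

/- The contour integral of the holomorphic function `cosh ∘ F - 1`, where `F` is the Cauchy
transform of `h`, is small, and `re cosh (q + ip) = cosh q * cos p` controls `cosh q` because the
Poisson integral `p` is at most `1`. -/
lemma integral_cosh_conjPoissonIntegral_sub_one_le (hh : Integrable h) (hbdd : ∀ x, |h x| ≤ 1 / 4)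
    (ha : 0 ≤ a) (hha : ∀ x, h x ≠ 0 → |x| ≤ a) (hh1 : ∫ x, |h x| ≤ 1) (hε : 0 < ε) :
    ∫ t in (-(a + 1))..(a + 1), (Real.cosh (conjPoissonIntegral ε h t) - 1)
      ≤ (4 * a + 12) * ∫ x, |h x| := by
  set b := a + 1
  have hb : -b ≤ b := by linarith
  have hq := continuous_conjPoissonIntegral hh hε
  have hp := continuous_poissonIntegral hh hε
  have hF := continuous_cauchyTransform_add_mul_I hh hε
  have hcontour := norm_integral_cosh_cauchyTransform_sub_one_le hh ha hha hh1 hε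
  have hre : ∫ t in (-b)..b,
        (Real.cosh (conjPoissonIntegral ε h t) - 1 - |poissonIntegral ε h t|) / 2
      ≤ (∫ t in (-b)..b, (Complex.cosh (cauchyTransform h (t + ε * I)) - 1)).re := by
    rw [← Complex.reCLM_apply, ← Complex.reCLM.intervalIntegral_comp_comm
      (Continuous.intervalIntegrable (by fun_prop) _ _)]
    refine intervalIntegral.integral_mono hb (Continuous.intervalIntegrable (by fun_prop) _ _)
      (Continuous.intervalIntegrable (by fun_prop) _ _) fun t => ?_
    simp only [cauchyTransform_add_mul_I hh hε, Complex.reCLM_apply]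
    exact half_cosh_sub_one_sub_le ((abs_poissonIntegral_le hε hbdd t).trans
      (by linarith [Real.pi_le_four]))
  have hpoisson : ∫ t in (-b)..b, |poissonIntegral ε h t| ≤ π * ∫ x, |h x| := by
    rw [intervalIntegral.integral_of_le hb]
    exact (setIntegral_le_integral (integrable_poissonIntegral hh hε).abs
      (.of_forall fun _ => abs_nonneg _)).trans (integral_abs_poissonIntegral_le hh hε)
  rw [intervalIntegral.integral_div, intervalIntegral.integral_sub
    (Continuous.intervalIntegrable (by fun_prop) _ _)
    (Continuous.intervalIntegrable (by fun_prop) _ _)] at hre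
  have hnonneg : 0 ≤ ∫ x, |h x| := integral_nonneg fun _ => abs_nonneg _
  nlinarith [Real.pi_le_four, Complex.re_le_norm
    (∫ t in (-b)..b, (Complex.cosh (cauchyTransform h (t + ε * I)) - 1))]

end CoshBound

section AbelSummation

variable {f : ℝ → ℝ} {t c ε : ℝ}

/-- The truncated Hilbert integral of `f` at `t`, with the interval of radius `r` removed. -/
def truncatedHilbert (f : ℝ → ℝ) (t r : ℝ) : ℝ := ∫ x in {x | r ≤ |x - t|}, (x - t)⁻¹ • f x

/-- The probability density on `(0, ∞)` for which the conjugate Poisson kernel at height `ε` is the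
average of the truncated kernels at radii `ε * s`; it is the derivative of `s ^ 2 / (1 + s ^ 2)`. -/
def abelWeight (s : ℝ) : ℝ := 2 * s / (1 + s ^ 2) ^ 2

lemma hasDerivAt_sq_div_one_add_sq (s : ℝ) :
    HasDerivAt (fun s : ℝ => s ^ 2 / (1 + s ^ 2)) (abelWeight s) s := by
  have hsq : HasDerivAt (fun s : ℝ => s ^ 2) (2 * s) s := by simpa using hasDerivAt_pow 2 s
  refine (hsq.div (hsq.const_add 1) (by positivity)).congr_deriv ?_
  rw [abelWeight]
  ring

lemma continuous_abelWeight : Continuous abelWeight :=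
  Continuous.div (by fun_prop) (by fun_prop) fun s => by positivity

lemma abelWeight_nonneg {s : ℝ} (hs : 0 ≤ s) : 0 ≤ abelWeight s := by
  unfold abelWeight
  positivity

lemma tendsto_sq_div_one_add_sq : Tendsto (fun s : ℝ => s ^ 2 / (1 + s ^ 2)) atTop (𝓝 1) := by
  have hlim : Tendsto (fun s : ℝ => 1 - 1 / (1 + s ^ 2)) atTop (𝓝 (1 - 0)) :=
    tendsto_const_nhds.sub (tendsto_const_nhds.div_atTop
      (tendsto_atTop_add_const_left _ _ (tendsto_pow_atTop two_ne_zero)))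
  rw [sub_zero] at hlim
  refine hlim.congr fun s => ?_
  field_simp
  ring

lemma integrableOn_abelWeight : IntegrableOn abelWeight (Ioi 0) :=
  integrableOn_Ioi_deriv_of_nonneg' (fun s _ => hasDerivAt_sq_div_one_add_sq s)
    (fun _ hs => abelWeight_nonneg (le_of_lt hs)) tendsto_sq_div_one_add_sq

lemma integral_abelWeight : ∫ s in Ioi (0 : ℝ), abelWeight s = 1 := by
  rw [integral_Ioi_of_hasDerivAt_of_nonneg' (fun s _ => hasDerivAt_sq_div_one_add_sq s)
    (fun _ hs => abelWeight_nonneg (le_of_lt hs)) tendsto_sq_div_one_add_sq]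
  simp

lemma integral_abelWeight_Ioc {r : ℝ} (hr : 0 ≤ r) :
    ∫ s in Ioc 0 r, abelWeight s = r ^ 2 / (1 + r ^ 2) := by
  rw [← intervalIntegral.integral_of_le hr,
    intervalIntegral.integral_eq_sub_of_hasDerivAt (fun s _ => hasDerivAt_sq_div_one_add_sq s)
      (continuous_abelWeight.intervalIntegrable _ _)]
  simp

/-- The kernel `abelWeight s / (x - t)`, restricted to `ε * s ≤ |x - t|`. -/
def abelKernel (ε t s x : ℝ) : ℝ :=
  {x | ε * s ≤ |x - t|}.indicator (fun x => abelWeight s * (x - t)⁻¹) x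

lemma abs_abelKernel_le (hε : 0 < ε) {s : ℝ} (hs : 0 < s) (x : ℝ) :
    |abelKernel ε t s x| ≤ 2 / ε * (1 + s ^ 2)⁻¹ := by
  unfold abelKernel
  by_cases hx : x ∈ {x | ε * s ≤ |x - t|}
  · have hinv : |x - t|⁻¹ ≤ (ε * s)⁻¹ := inv_anti₀ (mul_pos hε hs) hx
    rw [indicator_of_mem hx, abs_mul, abs_inv, abs_of_nonneg (abelWeight_nonneg hs.le)]
    calc abelWeight s * |x - t|⁻¹
        ≤ abelWeight s * (ε * s)⁻¹ := mul_le_mul_of_nonneg_left hinv (abelWeight_nonneg hs.le)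
      _ = 2 / ε * (1 + s ^ 2)⁻¹ * (1 + s ^ 2)⁻¹ := by
          rw [abelWeight]
          field_simp
      _ ≤ 2 / ε * (1 + s ^ 2)⁻¹ := by
          refine mul_le_of_le_one_right (by positivity) (inv_le_one_of_one_le₀ ?_)
          nlinarith [sq_nonneg s]
  · rw [indicator_of_notMem hx, abs_zero]
    positivity

lemma measurable_abelKernel (ε t : ℝ) : Measurable fun p : ℝ × ℝ => abelKernel ε t p.1 p.2 := by
  have hset : MeasurableSet {p : ℝ × ℝ | ε * p.1 ≤ |p.2 - t|} :=
    measurableSet_le (by fun_prop) (by fun_prop)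
  refine Measurable.indicator (f := fun p : ℝ × ℝ => abelWeight p.1 * (p.2 - t)⁻¹) ?_ hset
  exact (continuous_abelWeight.measurable.comp measurable_fst).mul (by fun_prop)

lemma integrable_abelKernel_mul (hf : Integrable f) (hε : 0 < ε) (t : ℝ) :
    Integrable (fun p : ℝ × ℝ => abelKernel ε t p.1 p.2 * f p.2)
      ((volume.restrict (Ioi 0)).prod volume) := by
  have hbound : Integrable (fun p : ℝ × ℝ => (1 + p.1 ^ 2)⁻¹ * f p.2)
      ((volume.restrict (Ioi 0)).prod volume) :=
    integrable_inv_one_add_sq.integrableOn.mul_prod hf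
  refine (hbound.norm.const_mul (2 / ε)).mono'
    ((measurable_abelKernel ε t).aestronglyMeasurable.mul hf.aestronglyMeasurable.comp_snd) ?_
  filter_upwards [Measure.quasiMeasurePreserving_fst.ae (ae_restrict_mem measurableSet_Ioi)]
    with p hp
  rw [norm_mul, norm_mul, Real.norm_of_nonneg (show 0 ≤ (1 + p.1 ^ 2)⁻¹ by positivity),
    ← mul_assoc, Real.norm_eq_abs (abelKernel ε t _ _)]
  exact mul_le_mul_of_nonneg_right (abs_abelKernel_le hε hp p.2) (norm_nonneg _)

lemma integral_abelKernel_fst (hε : 0 < ε) (t x : ℝ) :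
    ∫ s in Ioi (0 : ℝ), abelKernel ε t s x = conjPoissonKer ε (x - t) := by
  have hslice : ∀ s, abelKernel ε t s x =
      (Iic (|x - t| / ε)).indicator abelWeight s * (x - t)⁻¹ := fun s => by
    simp only [abelKernel, indicator_apply, mem_ofPred_eq, mem_Iic, le_div_iff₀ hε, mul_comm ε s,
      ite_mul, zero_mul]
  have hr : 0 ≤ |x - t| / ε := by positivity
  simp only [hslice]
  rw [integral_mul_const, setIntegral_indicator measurableSet_Iic, Ioi_inter_Iic,
    integral_abelWeight_Ioc hr, conjPoissonKer, div_pow, sq_abs]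
  rcases eq_or_ne (x - t) 0 with hx | hx
  · simp [hx]
  · field_simp
    ring

lemma integral_abelKernel_mul_snd (f : ℝ → ℝ) (ε t s : ℝ) :
    ∫ x, abelKernel ε t s x * f x = abelWeight s * truncatedHilbert f t (ε * s) := by
  rw [truncatedHilbert, ← integral_indicator (measurableSet_le_abs_sub t _), ← integral_const_mul]
  congr 1 with x
  simp only [abelKernel, indicator_apply, smul_eq_mul]
  split_ifs <;> ring

lemma conjPoissonIntegral_eq_integral_truncatedHilbert (hf : Integrable f) (hε : 0 < ε) (t : ℝ) :
    conjPoissonIntegral ε f t =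
      ∫ s in Ioi (0 : ℝ), abelWeight s * truncatedHilbert f t (ε * s) := by
  simp only [← integral_abelKernel_mul_snd, conjPoissonIntegral, ← integral_abelKernel_fst hε,
    mul_comm (f _), ← integral_mul_const]
  exact (integral_integral_swap (integrable_abelKernel_mul hf hε t)).symm

lemma abs_truncatedHilbert_le (hf : Integrable f) (t : ℝ) {r : ℝ} (hr : 0 < r) :
    |truncatedHilbert f t r| ≤ r⁻¹ * ∫ x, |f x| := by
  have hbound : |truncatedHilbert f t r| ≤ ∫ x in {x | r ≤ |x - t|}, r⁻¹ * |f x| := by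
    rw [truncatedHilbert, ← Real.norm_eq_abs]
    refine norm_integral_le_of_norm_le (hf.abs.const_mul _).integrableOn ?_
    filter_upwards [ae_restrict_mem (measurableSet_le_abs_sub t r)] with x hx
    rw [norm_smul, norm_inv]
    exact mul_le_mul_of_nonneg_right (inv_anti₀ hr hx) (norm_nonneg _)
  rw [← integral_const_mul]
  exact hbound.trans (setIntegral_le_integral (hf.abs.const_mul _)
    (.of_forall fun x => by positivity))

lemma exists_abs_truncatedHilbert_le (hf : Integrable f) (h : HasPrincipalValue volume f t c) :
    ∃ D, ∀ r > 0, |truncatedHilbert f t r| ≤ D := by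
  have hnear : ∀ᶠ r in 𝓝[>] (0 : ℝ), |truncatedHilbert f t r| < |c| + 1 :=
    h.abs.eventually (gt_mem_nhds (by linarith))
  obtain ⟨r₀, hr₀, hsub⟩ := mem_nhdsGT_iff_exists_Ioo_subset.1 hnear
  refine ⟨max (|c| + 1) (r₀⁻¹ * ∫ x, |f x|), fun r hr => ?_⟩
  rcases lt_or_ge r r₀ with hlt | hge
  · exact le_max_of_le_left (hsub ⟨hr, hlt⟩).le
  · refine le_max_of_le_right ((abs_truncatedHilbert_le hf t hr).trans ?_)
    exact mul_le_mul_of_nonneg_right (inv_anti₀ hr₀ hge) (integral_nonneg fun _ => abs_nonneg _)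

theorem HasPrincipalValue.tendsto_conjPoissonIntegral (hf : Integrable f)
    (h : HasPrincipalValue volume f t c) :
    Tendsto (fun ε => conjPoissonIntegral ε f t) (𝓝[>] 0) (𝓝 c) := by
  obtain ⟨D, hD⟩ := exists_abs_truncatedHilbert_le hf h
  have hlim : Tendsto (fun ε => ∫ s in Ioi (0 : ℝ), abelWeight s * truncatedHilbert f t (ε * s))
      (𝓝[>] 0) (𝓝 (∫ s in Ioi (0 : ℝ), abelWeight s * c)) := by
    refine tendsto_integral_filter_of_dominated_convergence (fun s => abelWeight s * D) ?_ ?_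
      (integrableOn_abelWeight.mul_const D) ?_
    · filter_upwards [self_mem_nhdsWithin] with ε hε
      simp only [← integral_abelKernel_mul_snd]
      exact (integrable_abelKernel_mul hf hε t).integral_prod_left.aestronglyMeasurable
    · filter_upwards [self_mem_nhdsWithin] with ε hε
      filter_upwards [ae_restrict_mem measurableSet_Ioi] with s hs
      rw [norm_mul, Real.norm_of_nonneg (abelWeight_nonneg (le_of_lt hs))]
      exact mul_le_mul_of_nonneg_left (hD _ (mul_pos hε hs)) (abelWeight_nonneg (le_of_lt hs))
    · filter_upwards [ae_restrict_mem measurableSet_Ioi] with s hs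
      have hscale : Tendsto (· * s) (𝓝[>] (0 : ℝ)) (𝓝[>] 0) :=
        tendsto_nhdsWithin_iff.2 ⟨((continuous_mul_const s).tendsto' 0 0 (zero_mul s)).mono_left
          nhdsWithin_le_nhds, eventually_mem_nhdsWithin.mono fun ε hε => mem_Ioi.2 (mul_pos hε hs)⟩
      exact (h.comp hscale).const_mul _
  rw [integral_mul_const, integral_abelWeight, one_mul] at hlim
  refine hlim.congr' ?_
  filter_upwards [self_mem_nhdsWithin] with ε hε
  exact (conjPoissonIntegral_eq_integral_truncatedHilbert hf hε t).symm

end AbelSummation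

section ZygmundYoung

variable {f : ℝ → ℝ} {M δ : ℝ}

/-- The part of `|a| * log⁺ |a|` coming from `|a| > M`. -/
def logTail (M a : ℝ) : ℝ := if M < |a| then |a| * max (Real.log |a|) 0 else 0

lemma logTail_nonneg (M a : ℝ) : 0 ≤ logTail M a := by
  unfold logTail
  split_ifs <;> positivity

lemma logTail_le (M a : ℝ) : logTail M a ≤ |a| * max (Real.log |a|) 0 := by
  unfold logTail
  split_ifs
  · exact le_rfl
  · positivity

lemma measurable_logTail (M : ℝ) : Measurable (logTail M) :=
  Measurable.ite (measurableSet_lt measurable_const (by fun_prop)) (by fun_prop) measurable_const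

lemma integrable_logTail (hf : Integrable f)
    (hlog : Integrable fun x => |f x| * max (Real.log |f x|) 0) (M : ℝ) :
    Integrable fun x => logTail M (f x) :=
  hlog.mono' ((measurable_logTail M).comp_aemeasurable hf.aemeasurable).aestronglyMeasurable
    (.of_forall fun _ => (Real.norm_of_nonneg (logTail_nonneg _ _)).trans_le (logTail_le _ _))

lemma tendsto_integral_logTail (hf : Integrable f)
    (hlog : Integrable fun x => |f x| * max (Real.log |f x|) 0) :
    Tendsto (fun M => ∫ x, logTail M (f x)) atTop (𝓝 0) := by
  rw [← integral_zero ℝ ℝ (μ := volume)]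
  refine tendsto_integral_filter_of_dominated_convergence _
    (.of_forall fun M => (integrable_logTail hf hlog M).aestronglyMeasurable)
    (.of_forall fun M => .of_forall fun _ =>
      (Real.norm_of_nonneg (logTail_nonneg _ _)).trans_le (logTail_le _ _)) hlog ?_
  filter_upwards with x
  refine tendsto_const_nhds.congr' ?_
  filter_upwards [eventually_ge_atTop |f x|] with M hM
  exact (if_neg hM.not_gt).symm

lemma sq_div_two_le_cosh_sub_one (q : ℝ) : q ^ 2 / 2 ≤ Real.cosh q - 1 := by
  have hsinh : |q| / 2 ≤ Real.sinh (|q| / 2) := Real.self_le_sinh_iff.2 (by positivity)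
  have hdouble : Real.cosh q = Real.cosh (|q| / 2) ^ 2 + Real.sinh (|q| / 2) ^ 2 := by
    rw [← Real.cosh_two_mul, mul_div_cancel₀ _ two_ne_zero, Real.cosh_abs]
  rw [hdouble, Real.cosh_sq, ← sq_abs q]
  nlinarith [abs_nonneg q]

lemma abs_mul_abs_le_of_abs_le (hδ : 0 < δ) {a : ℝ} (ha : |a| ≤ M) (q : ℝ) :
    |a| * |q| ≤ δ + M ^ 2 / (2 * δ) * (Real.cosh q - 1) := by
  have hamgm : δ + M ^ 2 / (2 * δ) * (q ^ 2 / 2) - M * |q| = (2 * δ - M * |q|) ^ 2 / (4 * δ) := by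
    rw [← sq_abs q]
    field_simp
    ring
  calc |a| * |q|
      ≤ M * |q| := mul_le_mul_of_nonneg_right ha (abs_nonneg q)
    _ ≤ δ + M ^ 2 / (2 * δ) * (q ^ 2 / 2) := by
        linarith [show 0 ≤ (2 * δ - M * |q|) ^ 2 / (4 * δ) by positivity]
    _ ≤ δ + M ^ 2 / (2 * δ) * (Real.cosh q - 1) := by
        gcongr
        exact sq_div_two_le_cosh_sub_one q

lemma exp_le_four_mul_cosh_sub_one {q : ℝ} (hq : 2 ≤ q) : Real.exp q ≤ 4 * (Real.cosh q - 1) := by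
  rw [Real.cosh_eq]
  have hsq : Real.exp (q / 2) * Real.exp (q / 2) = Real.exp q := by
    rw [← Real.exp_add, add_halves]
  nlinarith [Real.exp_pos (-q), Real.add_one_le_exp (q / 2)]

lemma mul_le_mul_log_add_cosh {a q : ℝ} (ha : 3 ≤ a) (hq : 0 ≤ q) :
    a * q ≤ 2 * (a * Real.log a) + 8 * (Real.cosh q - 1) := by
  have ha0 : 0 < a := by linarith
  have hlog : 1 ≤ Real.log a := by
    rw [Real.le_log_iff_exp_le ha0]
    linarith [Real.exp_one_lt_d9]
  rcases le_or_gt q (2 * Real.log a) with hle | hgt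
  · nlinarith [Real.one_le_cosh q]
  · have hexp : a ≤ Real.exp (q / 2) := by
      rw [← Real.log_le_iff_le_exp ha0]
      linarith
    calc a * q
        ≤ Real.exp (q / 2) * (2 * Real.exp (q / 2)) := by
          gcongr
          linarith [Real.add_one_le_exp (q / 2)]
      _ = 2 * Real.exp q := by
          rw [mul_left_comm, ← Real.exp_add, add_halves]
      _ ≤ 2 * (a * Real.log a) + 8 * (Real.cosh q - 1) := by
          nlinarith [exp_le_four_mul_cosh_sub_one (q := q) (by linarith)]

lemma abs_mul_abs_le_add_logTail (hM : 3 ≤ M) (hδ : 0 < δ) (a q : ℝ) :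
    |a| * |q| ≤ δ + (M ^ 2 / (2 * δ) + 8) * (Real.cosh q - 1) + 2 * logTail M a := by
  have hcosh : 0 ≤ Real.cosh q - 1 := sub_nonneg.2 (Real.one_le_cosh q)
  have hcoef : 0 ≤ M ^ 2 / (2 * δ) * (Real.cosh q - 1) := by positivity
  rcases le_or_gt |a| M with hle | hgt
  · linarith [abs_mul_abs_le_of_abs_le hδ hle q, logTail_nonneg M a]
  · have hlarge := mul_le_mul_log_add_cosh (hM.trans hgt.le) (abs_nonneg q)
    rw [Real.cosh_abs] at hlarge
    rw [logTail, if_pos hgt]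
    nlinarith [le_max_left (Real.log |a|) 0, abs_nonneg a]

end ZygmundYoung

section UniformIntegrability

variable {f h : ℝ → ℝ} {a M δ ε : ℝ} {E : Set ℝ}

lemma abs_mul_le_indicator_add_logTail {s : Set ℝ} (hfs : ∀ x, f x ≠ 0 → x ∈ s) (hM : 3 ≤ M)
    (hδ : 0 < δ) (q : ℝ → ℝ) (x : ℝ) :
    |f x * q x| ≤ s.indicator (fun x => δ + (M ^ 2 / (2 * δ) + 8) * (Real.cosh (q x) - 1)) x
      + 2 * logTail M (f x) := by
  by_cases hx : x ∈ s
  · rw [indicator_of_mem hx, abs_mul]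
    exact abs_mul_abs_le_add_logTail hM hδ _ _
  · rw [indicator_of_notMem hx, not_imp_comm.1 (hfs x) hx, zero_mul, abs_zero, zero_add]
    exact mul_nonneg zero_le_two (logTail_nonneg _ _)

lemma abs_integral_mul_conjPoissonIntegral_le (hf : Integrable f)
    (hlog : Integrable fun x => |f x| * max (Real.log |f x|) 0) (ha : 0 ≤ a)
    (hfa : ∀ x, f x ≠ 0 → |x| ≤ a) (hh : Integrable h) (hbdd : ∀ x, |h x| ≤ 1 / 4)
    (hha : ∀ x, h x ≠ 0 → |x| ≤ a) (hh1 : ∫ x, |h x| ≤ 1) (hM : 3 ≤ M) (hδ : 0 < δ)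
    (hε : 0 < ε) :
    |∫ x, f x * conjPoissonIntegral ε h x| ≤ 2 * (a + 1) * δ
      + (M ^ 2 / (2 * δ) + 8) * ((4 * a + 12) * ∫ x, |h x|) + 2 * ∫ x, logTail M (f x) := by
  set b := a + 1
  set A := M ^ 2 / (2 * δ) + 8
  have hb : -b ≤ b := by linarith
  have : 0 ≤ A := by positivity
  set s : Set ℝ := Ioc (-b) b
  have hfs : ∀ x, f x ≠ 0 → x ∈ s := fun x hx => by
    obtain ⟨hl, hr⟩ := abs_le.1 (hfa x hx)
    exact ⟨by linarith, by linarith⟩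
  set q := conjPoissonIntegral ε h
  have hq : Continuous q := continuous_conjPoissonIntegral hh hε
  have hint : IntegrableOn (fun x => δ + A * (Real.cosh (q x) - 1)) s :=
    Continuous.integrableOn_Ioc (by fun_prop)
  have htail := (integrable_logTail hf hlog M).const_mul 2
  have hyoung : ∀ x, ‖f x * q x‖ ≤
      s.indicator (fun x => δ + A * (Real.cosh (q x) - 1)) x + 2 * logTail M (f x) :=
    abs_mul_le_indicator_add_logTail hfs hM hδ q
  have hcosh := integral_cosh_conjPoissonIntegral_sub_one_le hh hbdd ha hha hh1 hε
  calc |∫ x, f x * q x|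
      ≤ ∫ x, (s.indicator (fun x => δ + A * (Real.cosh (q x) - 1)) x + 2 * logTail M (f x)) :=
        norm_integral_le_of_norm_le ((hint.integrable_indicator measurableSet_Ioc).add htail)
          (.of_forall hyoung)
    _ = 2 * b * δ + A * (∫ x in (-b)..b, (Real.cosh (q x) - 1)) + 2 * ∫ x, logTail M (f x) := by
        rw [integral_add (hint.integrable_indicator measurableSet_Ioc) htail,
          integral_indicator measurableSet_Ioc, integral_const_mul,
          ← intervalIntegral.integral_of_le hb, intervalIntegral.integral_add
            (Continuous.intervalIntegrable (by fun_prop) _ _)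
            (Continuous.intervalIntegrable (by fun_prop) _ _),
          intervalIntegral.integral_const_mul, intervalIntegral.integral_const, smul_eq_mul]
        ring
    _ ≤ 2 * b * δ + A * ((4 * a + 12) * ∫ x, |h x|) + 2 * ∫ x, logTail M (f x) := by gcongr

lemma exists_integral_mul_eq_mul_setIntegral_abs {q : ℝ → ℝ} {c : ℝ} (hq : Measurable q)
    (hc : 0 ≤ c) (hE : MeasurableSet E) (hEfin : volume E ≠ ⊤) :
    ∃ h : ℝ → ℝ, Integrable h ∧ (∀ x, |h x| ≤ c) ∧ (∀ x, h x ≠ 0 → x ∈ E) ∧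
      ∫ x, |h x| ≤ c * volume.real E ∧ ∫ x, h x * q x = c * ∫ x in E, |q x| := by
  set h : ℝ → ℝ := E.indicator fun x => c * (q x / |q x|) with hh_def
  have hbdd : ∀ x, |h x| ≤ E.indicator (fun _ => c) x := fun x => by
    by_cases hx : x ∈ E
    · rw [hh_def, indicator_of_mem hx, indicator_of_mem hx, abs_mul, abs_div, abs_abs,
        abs_of_nonneg hc]
      exact mul_le_of_le_one_right hc (div_self_le_one _)
    · simp [hh_def, hx]
  have hEint : Integrable (E.indicator fun _ => c) :=
    (integrableOn_const hEfin).integrable_indicator hE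
  have hh : Integrable h := hEint.mono'
    (((hq.div hq.abs).const_mul c).indicator hE).aestronglyMeasurable (.of_forall hbdd)
  refine ⟨h, hh, fun x => (hbdd x).trans (indicator_le_self' (fun _ _ => hc) x),
    fun x hx => mem_of_indicator_ne_zero hx, ?_, ?_⟩
  · refine (integral_mono hh.abs hEint hbdd).trans_eq ?_
    rw [integral_indicator hE, setIntegral_const, smul_eq_mul, mul_comm]
  · rw [← integral_indicator hE, ← integral_const_mul]
    congr 1 with x
    by_cases hx : x ∈ E
    · rw [hh_def, indicator_of_mem hx, indicator_of_mem hx, mul_assoc, div_mul_eq_mul_div,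
        ← abs_mul_abs_self, mul_self_div_self]
    · simp [hh_def, hx]

lemma setIntegral_abs_conjPoissonIntegral_le (hf : Integrable f)
    (hlog : Integrable fun x => |f x| * max (Real.log |f x|) 0) (ha : 0 ≤ a)
    (hfa : ∀ x, f x ≠ 0 → |x| ≤ a) (hE : MeasurableSet E) (hEa : E ⊆ Icc (-a) a)
    (hE4 : volume.real E ≤ 4) (hM : 3 ≤ M) (hδ : 0 < δ) (hε : 0 < ε) :
    ∫ t in E, |conjPoissonIntegral ε f t| ≤ 8 * (a + 1) * δ
      + (M ^ 2 / (2 * δ) + 8) * ((4 * a + 12) * volume.real E) + 8 * ∫ x, logTail M (f x) := by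
  obtain ⟨h, hh, hbdd, hhE, hh_le, hdual⟩ := exists_integral_mul_eq_mul_setIntegral_abs
    (continuous_conjPoissonIntegral hf hε).measurable (c := 1 / 4) (by norm_num) hE
    (measure_ne_top_of_subset hEa (by simp))
  have hpair := abs_integral_mul_conjPoissonIntegral_le hf hlog ha hfa hh hbdd
    (fun x hx => abs_le.2 (mem_Icc.1 (hEa (hhE x hx)))) (by linarith) hM hδ hε
  have hcoef : (M ^ 2 / (2 * δ) + 8) * ((4 * a + 12) * ∫ x, |h x|)
      ≤ (M ^ 2 / (2 * δ) + 8) * ((4 * a + 12) * (1 / 4 * volume.real E)) := by gcongr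
  rw [integral_mul_conjPoissonIntegral hf hh hε] at hdual
  linarith [neg_abs_le (∫ x, f x * conjPoissonIntegral ε h x)]

lemma exists_setIntegral_abs_conjPoissonIntegral_le (hf : Integrable f)
    (hlog : Integrable fun x => |f x| * max (Real.log |f x|) 0) (ha : 0 ≤ a)
    (hfa : ∀ x, f x ≠ 0 → |x| ≤ a) {η : ℝ} (hη : 0 < η) :
    ∃ δ > 0, ∀ ε > 0, ∀ E, MeasurableSet E → E ⊆ Icc (-a) a → volume.real E ≤ δ →
      ∫ t in E, |conjPoissonIntegral ε f t| ≤ η := by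
  obtain ⟨M, hM, htail⟩ := ((eventually_ge_atTop (3 : ℝ)).and
    ((tendsto_integral_logTail hf hlog).eventually
      (gt_mem_nhds (show 0 < η / 32 by positivity)))).exists
  set δ₀ := η / (32 * (a + 1)) with hδ₀_def
  have hδ₀ : 0 < δ₀ := by positivity
  set B := (M ^ 2 / (2 * δ₀) + 8) * (4 * a + 12) with hB_def
  have hB : 0 < B := by positivity
  refine ⟨min 4 (η / (4 * B)), by positivity, fun ε hε E hE hEa hvol => ?_⟩
  have hbound := setIntegral_abs_conjPoissonIntegral_le hf hlog ha hfa hE hEa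
    (hvol.trans (min_le_left _ _)) hM hδ₀ hε
  rw [← mul_assoc, ← hB_def] at hbound
  have hfirst : 8 * (a + 1) * δ₀ = η / 4 := by
    rw [hδ₀_def]
    field_simp
    norm_num
  have hsecond : B * volume.real E ≤ η / 4 := by
    refine (mul_le_mul_of_nonneg_left (hvol.trans (min_le_right _ _)) hB.le).trans_eq ?_
    field_simp
  linarith

lemma exists_setIntegral_abs_conjPoissonIntegral_Icc_le (hf : Integrable f)
    (hlog : Integrable fun x => |f x| * max (Real.log |f x|) 0) (hfa : ∀ x, f x ≠ 0 → |x| ≤ 2) :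
    ∃ C, ∀ ε > 0, ∫ t in Icc (-2) 2, |conjPoissonIntegral ε f t| ≤ C :=
  ⟨_, fun _ hε => setIntegral_abs_conjPoissonIntegral_le hf hlog zero_le_two hfa measurableSet_Icc
    subset_rfl (by norm_num) le_rfl one_pos hε⟩

end UniformIntegrability

section LogarithmicPairing

variable {f : ℝ → ℝ} {δ ε : ℝ}

lemma one_le_norm_of_one_le_abs_re_or_im {u : ℂ} (hu : 1 ≤ |u.re| ∨ 1 ≤ u.im) : 1 ≤ ‖u‖ :=
  hu.elim (·.trans (Complex.abs_re_le_norm u))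
    (·.trans ((le_abs_self _).trans (Complex.abs_im_le_norm u)))

lemma norm_log_le_seven {u : ℂ} (hu : 1 ≤ ‖u‖) (hu4 : ‖u‖ ≤ 4) : ‖Complex.log u‖ ≤ 7 := by
  have hre : |(Complex.log u).re| ≤ 3 := by
    rw [Complex.log_re, abs_of_nonneg (Real.log_nonneg hu)]
    linarith [Real.log_le_sub_one_of_pos (one_pos.trans_le hu)]
  have him : |(Complex.log u).im| ≤ 4 := by
    rw [Complex.log_im]
    exact (Complex.abs_arg_le_pi u).trans Real.pi_le_four
  linarith [Complex.norm_le_abs_re_add_abs_im (Complex.log u)]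

lemma norm_integral_cauchyTransform_mul_log_le (hf : Integrable f) (hfa : ∀ x, f x ≠ 0 → |x| ≤ 1)
    (hδ : 0 < δ) (hδ1 : δ ≤ 1) (hε : 0 < ε) :
    ‖∫ t in (-2 : ℝ)..2, cauchyTransform f (t + ε * I) * Complex.log (t + δ * I)‖
      ≤ 42 * ∫ x, |f x| := by
  have hK := norm_integral_bottom_side_le
    (K := fun z => cauchyTransform f z * Complex.log (z - ε * I + δ * I))
    (a := -2) (b := 2) (c := ε) (d := ε + 1) (C := (∫ x, |f x|) * 7) (by norm_num) (by linarith)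
    (fun z hz => ?_) fun z hz hside => ?_
  · simp only [add_sub_cancel_right] at hK
    linarith
  · have hlog : z - ε * I + δ * I ∈ Complex.slitPlane :=
      .inr (by simpa using (by linarith [hz.2.1] : 0 < z.im - ε + δ).ne')
    exact ((differentiableAt_cauchyTransform hf (hε.trans_le hz.2.1)).mul
      ((differentiableAt_id.sub_const _).add_const _ |>.clog hlog)).differentiableWithinAt
  · obtain ⟨⟨hre, hre'⟩, him, him'⟩ := hz
    have hfar : 2 ≤ |z.re| ∨ ε + 1 ≤ z.im := by
      rcases hside with h | h | h <;> simp [h]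
    have hlower : 1 ≤ ‖z - ε * I + δ * I‖ := by
      refine one_le_norm_of_one_le_abs_re_or_im (hfar.imp (fun h => ?_) fun h => ?_) <;> simp <;>
        linarith
    have hupper : ‖z - ε * I + δ * I‖ ≤ 4 := by
      refine (Complex.norm_le_abs_re_add_abs_im _).trans ?_
      have h₁ : |z.re| ≤ 2 := abs_le.2 ⟨hre, hre'⟩
      have h₂ : |z.im - ε + δ| ≤ 2 := abs_le.2 ⟨by linarith, by linarith⟩
      simpa using (by linarith : |z.re| + |z.im - ε + δ| ≤ 4)
    rw [norm_mul]
    exact mul_le_mul (norm_cauchyTransform_le_integral_abs hf hfa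
      (hfar.imp (fun h => by linarith) fun h => by linarith)) (norm_log_le_seven hlower hupper)
      (norm_nonneg _) (integral_nonneg fun _ => abs_nonneg _)

lemma continuous_log_add_mul_I (hδ : 0 < δ) : Continuous fun t : ℝ => Complex.log (t + δ * I) :=
  Continuous.clog (by fun_prop) fun t => .inr (by simpa using hδ.ne')

lemma abs_integral_poissonIntegral_mul_log_im_le (hf : Integrable f) (hε : 0 < ε) :
    |∫ t in (-2 : ℝ)..2, poissonIntegral ε f t * (Complex.log (t + δ * I)).im|
      ≤ 16 * ∫ x, |f x| := by
  have hp := integrable_poissonIntegral hf hε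
  calc |∫ t in (-2 : ℝ)..2, poissonIntegral ε f t * (Complex.log (t + δ * I)).im|
      ≤ ∫ t in Ioc (-2) 2, |poissonIntegral ε f t| * 4 := by
        rw [intervalIntegral.integral_of_le (by norm_num), ← Real.norm_eq_abs]
        refine norm_integral_le_of_norm_le (hp.abs.mul_const 4).integrableOn
          (.of_forall fun t => ?_)
        rw [norm_mul, Complex.log_im]
        exact mul_le_mul_of_nonneg_left ((Complex.abs_arg_le_pi _).trans Real.pi_le_four)
          (abs_nonneg _)
    _ ≤ ∫ t, |poissonIntegral ε f t| * 4 :=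
        setIntegral_le_integral (hp.abs.mul_const 4)
          (.of_forall fun _ => mul_nonneg (abs_nonneg _) zero_le_four)
    _ = (∫ t, |poissonIntegral ε f t|) * 4 := integral_mul_const _ _
    _ ≤ 16 * ∫ x, |f x| := by
        nlinarith [integral_abs_poissonIntegral_le hf hε, Real.pi_le_four,
          (integral_nonneg fun _ => abs_nonneg _ : 0 ≤ ∫ x, |f x|)]

lemma abs_integral_conjPoissonIntegral_mul_log_norm_le (hf : Integrable f)
    (hfa : ∀ x, f x ≠ 0 → |x| ≤ 1) (hδ : 0 < δ) (hδ1 : δ ≤ 1) (hε : 0 < ε) :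
    |∫ t in (-2 : ℝ)..2, conjPoissonIntegral ε f t * Real.log ‖(t + δ * I : ℂ)‖|
      ≤ 58 * ∫ x, |f x| := by
  have hlog := continuous_log_add_mul_I hδ
  have hFlog : Continuous fun t : ℝ => cauchyTransform f (t + ε * I) * Complex.log (t + δ * I) :=
    (continuous_cauchyTransform_add_mul_I hf hε).mul hlog
  have hre : IntervalIntegrable
      (fun t : ℝ => (cauchyTransform f (t + ε * I) * Complex.log (t + δ * I)).re) volume (-2) 2 :=
    (Complex.continuous_re.comp hFlog).intervalIntegrable _ _
  have him : IntervalIntegrable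
      (fun t : ℝ => poissonIntegral ε f t * (Complex.log (t + δ * I)).im) volume (-2) 2 :=
    ((continuous_poissonIntegral hf hε).mul
      (Complex.continuous_im.comp hlog)).intervalIntegrable _ _
  have hsplit : ∀ t : ℝ, conjPoissonIntegral ε f t * Real.log ‖(t + δ * I : ℂ)‖ =
      (cauchyTransform f (t + ε * I) * Complex.log (t + δ * I)).re
        + poissonIntegral ε f t * (Complex.log (t + δ * I)).im := fun t => by
    rw [Complex.mul_re, cauchyTransform_re hf hε, cauchyTransform_im hf hε, Complex.log_re]
    ring
  have hre_integral : ∫ t in (-2 : ℝ)..2,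
      (cauchyTransform f (t + ε * I) * Complex.log (t + δ * I)).re =
        (∫ t in (-2 : ℝ)..2, cauchyTransform f (t + ε * I) * Complex.log (t + δ * I)).re :=
    Complex.reCLM.intervalIntegral_comp_comm (hFlog.intervalIntegrable _ _)
  simp only [hsplit]
  rw [intervalIntegral.integral_add hre him, hre_integral]
  refine (abs_add_le _ _).trans ?_
  linarith [(Complex.abs_re_le_norm _).trans
    (norm_integral_cauchyTransform_mul_log_le hf hfa hδ hδ1 hε),
    abs_integral_poissonIntegral_mul_log_im_le (δ := δ) hf hε]

end LogarithmicPairing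

section NecessaryCondition

variable {f g : ℝ → ℝ} {a δ ε : ℝ}

lemma tendsto_integral_mul_of_tendsto_eLpNorm_one {α ι : Type*} [MeasurableSpace α] {μ : Measure α}
    {l : Filter ι} {F : ι → α → ℝ} {g φ : α → ℝ} {c : ℝ} (hF : ∀ i, Integrable (F i) μ)
    (hg : Integrable g μ) (hφ : AEStronglyMeasurable φ μ) (hφc : ∀ᵐ x ∂μ, ‖φ x‖ ≤ c)
    (hFg : Tendsto (fun i => eLpNorm (F i - g) 1 μ) l (𝓝 0)) :
    Tendsto (fun i => ∫ x, F i x * φ x ∂μ) l (𝓝 (∫ x, g x * φ x ∂μ)) := by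
  refine tendsto_integral_of_L1' _ (hg.mul_bdd hφ hφc).aestronglyMeasurable
    (.of_forall fun i => (hF i).mul_bdd hφ hφc) ?_
  have hupper := ENNReal.Tendsto.const_mul hFg (.inr (ENNReal.ofReal_ne_top (r := c)))
  rw [mul_zero] at hupper
  refine tendsto_of_tendsto_of_tendsto_of_le_of_le tendsto_const_nhds hupper (fun _ => bot_le)
    fun i => eLpNorm_le_mul_eLpNorm_of_ae_le_mul ?_ 1
  filter_upwards [hφc] with x hx
  simp only [Pi.sub_apply, ← sub_mul, norm_mul]
  rw [mul_comm]
  exact mul_le_mul_of_nonneg_right hx (norm_nonneg _)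

lemma unifIntegrable_conjPoissonIntegral {ι : Type*} {e : ι → ℝ} (he : ∀ i, 0 < e i)
    (hf : Integrable f) (hlog : Integrable fun x => |f x| * max (Real.log |f x|) 0) (ha : 0 ≤ a)
    (hfa : ∀ x, f x ≠ 0 → |x| ≤ a) :
    UnifIntegrable (fun i => conjPoissonIntegral (e i) f) 1 (volume.restrict (Icc (-a) a)) := by
  intro η hη
  obtain ⟨δ, hδ, hsmall⟩ := exists_setIntegral_abs_conjPoissonIntegral_le hf hlog ha hfa hη
  refine ⟨δ, hδ, fun i s hs hμs => ?_⟩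
  rw [Measure.restrict_apply hs] at hμs
  have hint : IntegrableOn (conjPoissonIntegral (e i) f) (s ∩ Icc (-a) a) :=
    (continuous_conjPoissonIntegral hf (he i)).integrableOn_Icc.mono_set inter_subset_right
  rw [eLpNorm_indicator_eq_eLpNorm_restrict hs, Measure.restrict_restrict hs,
    eLpNorm_one_eq_lintegral_enorm, ← ofReal_integral_norm_eq_lintegral_enorm hint]
  exact ENNReal.ofReal_le_ofReal (hsmall (e i) (he i) _ (hs.inter measurableSet_Icc)
    inter_subset_right (ENNReal.toReal_le_of_le_ofReal hδ.le hμs))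

lemma tendsto_eLpNorm_conjPoissonIntegral_sub {e : ℕ → ℝ} (he : ∀ n, 0 < e n)
    (he0 : Tendsto e atTop (𝓝 0)) (hf : Integrable f)
    (hlog : Integrable fun x => |f x| * max (Real.log |f x|) 0) (ha : 0 ≤ a)
    (hfa : ∀ x, f x ≠ 0 → |x| ≤ a) (hg : IntegrableOn g (Icc (-a) a))
    (hfg : ∀ᵐ t ∂volume.restrict (Icc (-a) a), HasPrincipalValue volume f t (g t)) :
    Tendsto (fun n => eLpNorm (conjPoissonIntegral (e n) f - g) 1 (volume.restrict (Icc (-a) a)))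
      atTop (𝓝 0) := by
  refine tendsto_Lp_finite_of_tendsto_ae le_rfl ENNReal.one_ne_top
    (fun n => (continuous_conjPoissonIntegral hf (he n)).aestronglyMeasurable)
    (memLp_one_iff_integrable.2 hg) (unifIntegrable_conjPoissonIntegral he hf hlog ha hfa) ?_
  filter_upwards [hfg] with t ht
  exact (ht.tendsto_conjPoissonIntegral hf).comp
    (tendsto_nhdsWithin_iff.2 ⟨he0, .of_forall he⟩)

lemma norm_add_mul_I_le (t : ℝ) (hδ : 0 ≤ δ) : ‖(t + δ * I : ℂ)‖ ≤ |t| + δ := by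
  simpa [abs_of_nonneg hδ] using norm_add_le (t : ℂ) (δ * I)

lemma le_norm_add_mul_I (t δ : ℝ) : δ ≤ ‖(t + δ * I : ℂ)‖ := by
  simpa using (le_abs_self _).trans (Complex.abs_im_le_norm (t + δ * I))

lemma norm_add_mul_I_pos (t : ℝ) (hδ : 0 < δ) : 0 < ‖(t + δ * I : ℂ)‖ :=
  hδ.trans_le (le_norm_add_mul_I t δ)

lemma continuous_log_norm_add_mul_I (hδ : 0 < δ) :
    Continuous fun t : ℝ => Real.log ‖(t + δ * I : ℂ)‖ := by
  simpa only [Function.comp_def, Complex.log_re] using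
    Complex.continuous_re.comp (continuous_log_add_mul_I hδ)

lemma log_norm_add_mul_I_le_one {t : ℝ} (ht : |t| ≤ 1) (hδ : 0 < δ) (hδ1 : δ ≤ 1) :
    Real.log ‖(t + δ * I : ℂ)‖ ≤ 1 := by
  linarith [Real.log_le_sub_one_of_pos (norm_add_mul_I_pos t hδ), norm_add_mul_I_le t hδ.le]

lemma log_norm_add_mul_I_le_log_add_one {t : ℝ} (ht : |t| ≤ δ) (hδ : 0 < δ) :
    Real.log ‖(t + δ * I : ℂ)‖ ≤ Real.log δ + 1 := by
  calc Real.log ‖(t + δ * I : ℂ)‖ ≤ Real.log (2 * δ) :=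
        Real.log_le_log (norm_add_mul_I_pos t hδ) (by linarith [norm_add_mul_I_le t hδ.le])
    _ = Real.log 2 + Real.log δ := Real.log_mul two_ne_zero hδ.ne'
    _ ≤ Real.log δ + 1 := by linarith [Real.log_two_lt_d9]

lemma log_le_log_norm_add_mul_I (t : ℝ) (hδ : 0 < δ) :
    Real.log δ ≤ Real.log ‖(t + δ * I : ℂ)‖ :=
  Real.log_le_log hδ (le_norm_add_mul_I t δ)

lemma abs_log_norm_add_mul_I_le_two {t : ℝ} (ht : 1 ≤ |t|) (ht2 : |t| ≤ 2) (hδ : 0 ≤ δ)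
    (hδ1 : δ ≤ 1) : |Real.log ‖(t + δ * I : ℂ)‖| ≤ 2 := by
  have hone : 1 ≤ ‖(t + δ * I : ℂ)‖ :=
    one_le_norm_of_one_le_abs_re_or_im (.inl (by simpa using ht))
  rw [abs_of_nonneg (Real.log_nonneg hone)]
  linarith [Real.log_le_sub_one_of_pos (one_pos.trans_le hone), norm_add_mul_I_le t hδ]

lemma abs_setIntegral_conjPoissonIntegral_mul_log_norm_diff_le (hf : Integrable f) (hδ : 0 ≤ δ)
    (hδ1 : δ ≤ 1) (hε : 0 < ε) :
    |∫ t in Icc (-2) 2 \ Icc (-1) 1, conjPoissonIntegral ε f t * Real.log ‖(t + δ * I : ℂ)‖|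
      ≤ (∫ t in Icc (-2) 2, |conjPoissonIntegral ε f t|) * 2 := by
  have habs : IntegrableOn (fun t => |conjPoissonIntegral ε f t| * 2) (Icc (-2) 2) :=
    ((continuous_conjPoissonIntegral hf hε).abs.mul_const 2).integrableOn_Icc
  rw [← integral_mul_const, ← Real.norm_eq_abs]
  refine (norm_integral_le_of_norm_le (habs.mono_set sdiff_subset)
    (ae_restrict_of_forall_mem (measurableSet_Icc.diff measurableSet_Icc) ?_)).trans
    (setIntegral_mono_set habs (.of_forall fun _ => mul_nonneg (abs_nonneg _) zero_le_two)
      sdiff_subset.eventuallyLE)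
  rintro t ⟨ht2, ht1⟩
  have ht : 1 ≤ |t| := (not_le.1 fun h => ht1 (abs_le.1 h)).le
  rw [norm_mul]
  exact mul_le_mul_of_nonneg_left (abs_log_norm_add_mul_I_le_two ht (abs_le.2 ht2) hδ hδ1)
    (abs_nonneg _)

lemma exists_abs_integral_conjPoissonIntegral_mul_log_norm_le (hf : Integrable f)
    (hlog : Integrable fun x => |f x| * max (Real.log |f x|) 0) (hfa : ∀ x, f x ≠ 0 → |x| ≤ 1) :
    ∃ K, ∀ δ : ℝ, 0 < δ → δ ≤ 1 → ∀ ε > 0,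
      |∫ t in Icc (-1) 1, conjPoissonIntegral ε f t * Real.log ‖(t + δ * I : ℂ)‖| ≤ K := by
  obtain ⟨C, hC⟩ := exists_setIntegral_abs_conjPoissonIntegral_Icc_le hf hlog
    fun x hx => (hfa x hx).trans one_le_two
  refine ⟨58 * (∫ x, |f x|) + C * 2, fun δ hδ hδ1 ε hε => ?_⟩
  have hdiff := (abs_setIntegral_conjPoissonIntegral_mul_log_norm_diff_le hf hδ.le hδ1 hε).trans
    (mul_le_mul_of_nonneg_right (hC ε hε) zero_le_two)
  have hpair := abs_integral_conjPoissonIntegral_mul_log_norm_le hf hfa hδ hδ1 hε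
  rw [intervalIntegral.integral_of_le (by norm_num), ← integral_Icc_eq_integral_Ioc] at hpair
  have hint : IntegrableOn
      (fun t => conjPoissonIntegral ε f t * Real.log ‖(t + δ * I : ℂ)‖) (Icc (-2) 2) :=
    ((continuous_conjPoissonIntegral hf hε).mul
      (continuous_log_norm_add_mul_I hδ)).integrableOn_Icc
  rw [setIntegral_sdiff measurableSet_Icc hint (Icc_subset_Icc (by norm_num) one_le_two)] at hdiff
  rw [abs_le] at *
  constructor <;> linarith

lemma exists_abs_integral_mul_log_norm_le_of_hasPrincipalValue (hf : Integrable f)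
    (hlog : Integrable fun x => |f x| * max (Real.log |f x|) 0) (hfa : ∀ x, f x ≠ 0 → |x| ≤ 1)
    (hg : IntegrableOn g (Icc (-1) 1))
    (hfg : ∀ᵐ t ∂volume.restrict (Icc (-1) 1), HasPrincipalValue volume f t (g t)) :
    ∃ K, ∀ δ : ℝ, 0 < δ → δ ≤ 1 →
      |∫ t in Icc (-1) 1, g t * Real.log ‖(t + δ * I : ℂ)‖| ≤ K := by
  obtain ⟨K, hK⟩ := exists_abs_integral_conjPoissonIntegral_mul_log_norm_le hf hlog hfa
  refine ⟨K, fun δ hδ hδ1 => ?_⟩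
  have he : ∀ n : ℕ, (0 : ℝ) < 1 / (n + 1) := fun n => Nat.one_div_pos_of_nat
  have hbdd : ∀ᵐ t : ℝ ∂volume.restrict (Icc (-1) 1),
      ‖Real.log ‖(t + δ * I : ℂ)‖‖ ≤ 1 - Real.log δ := by
    refine ae_restrict_of_forall_mem measurableSet_Icc fun t ht => abs_le.2 ⟨?_, ?_⟩
    · linarith [log_le_log_norm_add_mul_I t hδ]
    · linarith [log_norm_add_mul_I_le_one (abs_le.2 ht) hδ hδ1, Real.log_nonpos hδ.le hδ1]
  have hlim := tendsto_integral_mul_of_tendsto_eLpNorm_one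
    (fun n => (continuous_conjPoissonIntegral hf (he n)).integrableOn_Icc) hg
    (continuous_log_norm_add_mul_I hδ).aestronglyMeasurable hbdd
    (tendsto_eLpNorm_conjPoissonIntegral_sub he tendsto_one_div_add_atTop_nhds_zero_nat hf hlog
      zero_le_one hfa hg hfg)
  exact le_of_tendsto hlim.abs (.of_forall fun n => hK δ hδ hδ1 _ (he n))

theorem exists_neg_log_mul_setIntegral_le_of_hasPrincipalValue (hf : Integrable f)
    (hlog : Integrable fun x => |f x| * max (Real.log |f x|) 0) (hfa : ∀ x, f x ≠ 0 → |x| ≤ 1)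
    (hg : IntegrableOn g (Icc (-1) 1)) (hg0 : ∀ t, 0 ≤ g t)
    (hfg : ∀ᵐ t ∂volume.restrict (Icc (-1) 1), HasPrincipalValue volume f t (g t)) :
    ∃ K, ∀ δ : ℝ, 0 < δ → δ ≤ 1 → -Real.log δ * ∫ t in Ioc 0 δ, g t ≤ K := by
  obtain ⟨K, hK⟩ := exists_abs_integral_mul_log_norm_le_of_hasPrincipalValue hf hlog hfa hg hfg
  refine ⟨(∫ t in Icc (-1) 1, g t) + K, fun δ hδ hδ1 => ?_⟩
  have hgl : IntegrableOn (fun t => g t * Real.log ‖(t + δ * I : ℂ)‖) (Icc (-1) 1) :=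
    hg.mul_continuousOn (continuous_log_norm_add_mul_I hδ).continuousOn isCompact_Icc
  have hweighted : IntegrableOn (fun t => g t * (1 - Real.log ‖(t + δ * I : ℂ)‖)) (Icc (-1) 1) := by
    simpa only [mul_sub, mul_one] using! hg.sub hgl
  have hsub : Ioc 0 δ ⊆ Icc (-1) 1 := fun t ht => ⟨by linarith [ht.1], ht.2.trans hδ1⟩
  calc -Real.log δ * ∫ t in Ioc 0 δ, g t
      = ∫ t in Ioc 0 δ, g t * -Real.log δ := by rw [integral_mul_const, mul_comm]
    _ ≤ ∫ t in Ioc 0 δ, g t * (1 - Real.log ‖(t + δ * I : ℂ)‖) := by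
        refine setIntegral_mono_on ((hg.mono_set hsub).mul_const _) (hweighted.mono_set hsub)
          measurableSet_Ioc fun t ht => mul_le_mul_of_nonneg_left ?_ (hg0 t)
        linarith [log_norm_add_mul_I_le_log_add_one ((abs_of_pos ht.1).trans_le ht.2) hδ]
    _ ≤ ∫ t in Icc (-1) 1, g t * (1 - Real.log ‖(t + δ * I : ℂ)‖) := by
        refine setIntegral_mono_set hweighted
          (ae_restrict_of_forall_mem measurableSet_Icc fun t ht => mul_nonneg (hg0 t) ?_)
          hsub.eventuallyLE
        linarith [log_norm_add_mul_I_le_one (abs_le.2 ht) hδ hδ1]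
    _ = (∫ t in Icc (-1) 1, g t) - ∫ t in Icc (-1) 1, g t * Real.log ‖(t + δ * I : ℂ)‖ := by
        simp only [mul_sub, mul_one]
        exact integral_sub hg hgl
    _ ≤ (∫ t in Icc (-1) 1, g t) + K := by
        linarith [neg_abs_le (∫ t in Icc (-1) 1, g t * Real.log ‖(t + δ * I : ℂ)‖), hK δ hδ hδ1]

end NecessaryCondition

section RangeCondition

variable {f : ℝ → ℂ} {t : ℝ}

lemma MemLlogL.integrableOn (hf : MemLlogL f) : IntegrableOn f (Ioo (-1) 1) := by
  have hconst : IntegrableOn (fun _ : ℝ => Real.exp 1) (Ioo (-1) 1) := integrableOn_const (by simp)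
  refine (hconst.add hf.2).mono' hf.1 (.of_forall fun x => ?_)
  have hnonneg : 0 ≤ ‖f x‖ * max (Real.log ‖f x‖) 0 :=
    mul_nonneg (norm_nonneg _) (le_max_right _ _)
  rcases le_or_gt ‖f x‖ (Real.exp 1) with hsmall | hlarge
  · exact hsmall.trans (le_add_of_nonneg_right hnonneg)
  · have hlog : 1 ≤ max (Real.log ‖f x‖) 0 :=
      ((Real.le_log_iff_exp_le ((Real.exp_pos 1).trans hlarge)).2 hlarge.le).trans (le_max_left _ _)
    exact (le_mul_of_one_le_right (norm_nonneg _) hlog).trans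
      (le_add_of_nonneg_left (Real.exp_pos 1).le)

lemma mul_max_log_zero_mono {a b : ℝ} (ha : 0 ≤ a) (hab : a ≤ b) :
    a * max (Real.log a) 0 ≤ b * max (Real.log b) 0 := by
  rcases ha.eq_or_lt with rfl | hpos
  · simpa using mul_nonneg hab (le_max_right _ _)
  · exact mul_le_mul hab (max_le_max_right 0 (Real.log_le_log hpos hab)) (le_max_right _ _)
      (ha.trans hab)

lemma MemLlogL.integrable_indicator_re_mul_log (hf : MemLlogL f) :
    Integrable fun x => |(Ioo (-1 : ℝ) 1).indicator (fun x => (f x).re) x| *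
      max (Real.log |(Ioo (-1 : ℝ) 1).indicator (fun x => (f x).re) x|) 0 := by
  have hre : IntegrableOn (fun x => (f x).re) (Ioo (-1) 1) := hf.integrableOn.re
  have hmeas := ((integrable_indicator_iff measurableSet_Ioo).2 hre).aemeasurable.abs
  refine ((integrable_indicator_iff measurableSet_Ioo).2 hf.2).mono'
    (hmeas.mul ((Real.measurable_log.comp_aemeasurable hmeas).max
      aemeasurable_const)).aestronglyMeasurable (.of_forall fun x => ?_)
  rw [Real.norm_of_nonneg (mul_nonneg (abs_nonneg _) (le_max_right _ _))]
  by_cases hx : x ∈ Ioo (-1 : ℝ) 1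
  · simpa only [indicator_of_mem hx] using
      mul_max_log_zero_mono (abs_nonneg _) (Complex.abs_re_le_norm _)
  · simp only [indicator_of_notMem hx, abs_zero, zero_mul, le_refl]

theorem MemLlogL.exists_neg_log_mul_setIntegral_le {g : ℝ → ℝ} (hf : MemLlogL f)
    (hg : IntegrableOn g (Ioo (-1) 1)) (hg0 : ∀ t, 0 ≤ g t)
    (hfg : ∀ᵐ t ∂μI, HasPrincipalValue μI f t (g t : ℂ)) :
    ∃ K, ∀ δ : ℝ, 0 < δ → δ ≤ 1 → -Real.log δ * ∫ t in Ioc 0 δ, g t ≤ K := by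
  refine exists_neg_log_mul_setIntegral_le_of_hasPrincipalValue
    (f := (Ioo (-1) 1).indicator fun x => (f x).re)
    ((integrable_indicator_iff measurableSet_Ioo).2 hf.integrableOn.re)
    hf.integrable_indicator_re_mul_log (fun x hx => ?_)
    (by rwa [integrableOn_Icc_iff_integrableOn_Ioo]) hg0 ?_
  · have hmem := mem_of_indicator_ne_zero hx
    exact abs_le.2 ⟨hmem.1.le, hmem.2.le⟩
  · rw [← restrict_Ioo_eq_restrict_Icc]
    filter_upwards [hfg] with t ht
    simpa using (ht.clm_comp Complex.reCLM hf.integrableOn).indicator measurableSet_Ioo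

-- `FHT` takes the default value of `limUnder` where the truncated integrals diverge.
lemma exists_hasPrincipalValue_of_FHT_ne :
    ∃ c : ℂ, ∀ f t, FHT f t ≠ c → HasPrincipalValue μI f t (π * FHT f t) := by
  refine ⟨Classical.choice inferInstance, fun f t hne => ?_⟩
  have hconv := tendsto_nhds_limUnder (not_imp_comm.1 limUnder_of_not_tendsto hne)
  have hpi : (π : ℂ) ≠ 0 := Complex.ofReal_ne_zero.2 Real.pi_ne_zero
  refine Tendsto.congr (fun ε => ?_) (hconv.const_mul (π : ℂ))
  rw [mul_inv_cancel_left₀ hpi, setIntegral_div_ofReal_sub]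

end RangeCondition

section LogarithmicSingularity

variable {x δ : ℝ}

/-- The density `1 / (2x (1 - log x)^{3/2})` on the positive half-line, extended by zero: it is
integrable at `0`, but so slowly that `|log δ|` times its integral over `(0, δ)` is unbounded. -/
def logSingularDensity (x : ℝ) : ℝ :=
  if 0 < x then 1 / (2 * x * √(1 - Real.log x) ^ 3) else 0

/-- The primitive `(1 - log x)^{-1/2}` of `logSingularDensity` on `(0, 1]`, extended by its limit
`0` at the origin. -/
def logSingularPrimitive (x : ℝ) : ℝ := if 0 < x then (√(1 - Real.log x))⁻¹ else 0

lemma logSingularDensity_nonneg (x : ℝ) : 0 ≤ logSingularDensity x := by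
  unfold logSingularDensity
  split_ifs <;> positivity

lemma hasDerivAt_logSingularPrimitive (hx : 0 < x) (hx1 : x ≤ 1) :
    HasDerivAt logSingularPrimitive (logSingularDensity x) x := by
  have hlog : 0 < 1 - Real.log x := by linarith [Real.log_nonpos hx.le hx1]
  have hsqrt : √(1 - Real.log x) ≠ 0 := (Real.sqrt_pos.2 hlog).ne'
  have hinv := (((Real.hasDerivAt_log hx.ne').const_sub 1).sqrt hlog.ne').inv hsqrt
  refine (hinv.congr_of_eventuallyEq ?_).congr_deriv ?_
  · filter_upwards [lt_mem_nhds hx] with y hy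
    exact if_pos hy
  · rw [logSingularDensity, if_pos hx]
    field_simp

lemma tendsto_logSingularPrimitive_zero : Tendsto logSingularPrimitive (𝓝[>] 0) (𝓝 0) := by
  have hlog : Tendsto (fun x => 1 - Real.log x) (𝓝[>] 0) atTop :=
    tendsto_atTop_add_const_left _ 1 (tendsto_neg_atBot_atTop.comp Real.tendsto_log_nhdsGT_zero)
  refine (tendsto_inv_atTop_zero.comp (Real.tendsto_sqrt_atTop.comp hlog)).congr' ?_
  filter_upwards [self_mem_nhdsWithin] with x hx
  exact (if_pos hx).symm

lemma continuousOn_logSingularPrimitive : ContinuousOn logSingularPrimitive (Icc 0 1) := by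
  intro x hx
  rcases hx.1.eq_or_lt with rfl | hpos
  · have h : ContinuousWithinAt logSingularPrimitive (Ioi 0) 0 := by
      simpa [ContinuousWithinAt, logSingularPrimitive] using! tendsto_logSingularPrimitive_zero
    exact (continuousWithinAt_insert_self.2 h).mono fun y hy =>
      hy.1.eq_or_lt.imp Eq.symm id
  · exact (hasDerivAt_logSingularPrimitive hpos hx.2).continuousAt.continuousWithinAt

lemma integrableOn_logSingularDensity_Ioc : IntegrableOn logSingularDensity (Ioc 0 1) :=
  intervalIntegral.integrableOn_deriv_of_nonneg continuousOn_logSingularPrimitive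
    (fun _ hx => hasDerivAt_logSingularPrimitive hx.1 hx.2.le)
    fun x _ => logSingularDensity_nonneg x

lemma integrableOn_logSingularDensity : IntegrableOn logSingularDensity (Ioo (-1) 1) := by
  have hneg : IntegrableOn logSingularDensity (Ioc (-1) 0) :=
    integrableOn_zero.congr_fun (fun x hx => (if_neg hx.2.not_gt).symm) measurableSet_Ioc
  refine (hneg.union integrableOn_logSingularDensity_Ioc).mono_set ?_
  rw [Ioc_union_Ioc_eq_Ioc (by norm_num) zero_le_one]
  exact Ioo_subset_Ioc_self

lemma setIntegral_logSingularDensity (hδ : 0 < δ) (hδ1 : δ ≤ 1) :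
    ∫ x in Ioc 0 δ, logSingularDensity x = (√(1 - Real.log δ))⁻¹ := by
  rw [← intervalIntegral.integral_of_le hδ.le,
    intervalIntegral.integral_eq_sub_of_hasDerivAt_of_le hδ.le
      (continuousOn_logSingularPrimitive.mono (Icc_subset_Icc_right hδ1))
      (fun x hx => hasDerivAt_logSingularPrimitive hx.1 (hx.2.le.trans hδ1))
      ((intervalIntegrable_iff_integrableOn_Ioc_of_le hδ.le).2
        (integrableOn_logSingularDensity_Ioc.mono_set (Ioc_subset_Ioc_right hδ1)))]
  simp [logSingularPrimitive, hδ]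

lemma exists_lt_neg_log_mul_setIntegral_logSingularDensity (K : ℝ) :
    ∃ δ : ℝ, 0 < δ ∧ δ ≤ 1 ∧ K < -Real.log δ * ∫ x in Ioc 0 δ, logSingularDensity x := by
  set s := max K 0 + 2
  have hs2 : 2 ≤ s := le_add_of_nonneg_left (le_max_right _ _)
  have hδ1 : Real.exp (1 - s ^ 2) ≤ 1 := Real.exp_le_one_iff.2 (by nlinarith)
  refine ⟨Real.exp (1 - s ^ 2), Real.exp_pos _, hδ1, ?_⟩
  rw [setIntegral_logSingularDensity (Real.exp_pos _) hδ1, Real.log_exp, sub_sub_cancel,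
    Real.sqrt_sq (by linarith), ← div_eq_mul_inv, lt_div_iff₀ (by linarith)]
  nlinarith [le_max_left K 0]

lemma neg_log_mul_setIntegral_logSingularDensity_le {C : ℝ} (hC : 0 ≤ C) (hδ : 0 < δ)
    (hδ1 : δ ≤ 1) : -Real.log δ * ∫ x in Ioc 0 δ, logSingularDensity x
      ≤ -Real.log δ * ∫ x in Ioc 0 δ, π * (logSingularDensity x + C) := by
  have hint : IntegrableOn logSingularDensity (Ioc 0 δ) :=
    integrableOn_logSingularDensity_Ioc.mono_set (Ioc_subset_Ioc_right hδ1)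
  refine mul_le_mul_of_nonneg_left (setIntegral_mono hint
    ((hint.add (integrableOn_const (by simp))).const_mul π) fun x => ?_)
    (neg_nonneg.2 (Real.log_nonpos hδ.le hδ1))
  nlinarith [logSingularDensity_nonneg x, Real.pi_gt_three]

theorem exists_integrableOn_not_FHT_ae_eq : ∃ g : ℝ → ℂ, IntegrableOn g (Ioo (-1) 1) ∧
    ¬ ∃ f, MemLlogL f ∧ FHT f =ᵐ[μI] g := by
  obtain ⟨c, hc⟩ := exists_hasPrincipalValue_of_FHT_ne
  -- Adding a constant larger than `‖c‖` keeps `g` away from the default value `c`.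
  set C := ‖c‖ + 1
  have hC : 0 ≤ C := by positivity
  have hgC : ∀ x, ((logSingularDensity x + C : ℝ) : ℂ) ≠ c := fun x hx => by
    have hnorm := Complex.norm_of_nonneg (add_nonneg (logSingularDensity_nonneg x) hC)
    rw [hx] at hnorm
    linarith [logSingularDensity_nonneg x]
  have hint : IntegrableOn (fun x => logSingularDensity x + C) (Ioo (-1) 1) :=
    integrableOn_logSingularDensity.add (integrableOn_const (by simp))
  refine ⟨fun x => ((logSingularDensity x + C : ℝ) : ℂ), hint.ofReal, ?_⟩
  rintro ⟨f, hf, hfg⟩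
  have hpv : ∀ᵐ t ∂μI, HasPrincipalValue μI f t ((π * (logSingularDensity t + C) : ℝ) : ℂ) := by
    filter_upwards [hfg] with t ht
    simpa only [ht, Complex.ofReal_mul] using hc f t (ht.trans_ne (hgC t))
  obtain ⟨K, hK⟩ := hf.exists_neg_log_mul_setIntegral_le (hint.const_mul π)
    (fun t => mul_nonneg Real.pi_pos.le (add_nonneg (logSingularDensity_nonneg t) hC)) hpv
  obtain ⟨δ, hδ, hδ1, hKδ⟩ := exists_lt_neg_log_mul_setIntegral_logSingularDensity K
  exact (hKδ.trans_le (neg_log_mul_setIntegral_logSingularDensity_le hC hδ hδ1)).not_ge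
    (hK δ hδ hδ1)

end LogarithmicSingularity

/-- The range `T(L log L)` is a proper dense (linear) subspace of `L¹(-1,1)`: it is dense
in `L¹` and there is `g ∈ L¹` not of the form `T(f)`, `f ∈ L log L`. -/
theorem range_proper_dense :
    (∀ g : ℝ → ℂ, IntegrableOn g (Set.Ioo (-1 : ℝ) 1) → ∀ ε : ℝ, 0 < ε →
      ∃ f : ℝ → ℂ, MemLlogL f ∧
        ∫ x in Set.Ioo (-1 : ℝ) 1, ‖FHT f x - g x‖ < ε) ∧
    (∃ g : ℝ → ℂ, IntegrableOn g (Set.Ioo (-1 : ℝ) 1) ∧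
      ¬ ∃ f : ℝ → ℂ, MemLlogL f ∧ FHT f =ᵐ[μI] g) :=
  ⟨fun _ hg _ hε => exists_memLlogL_integral_norm_FHT_sub_lt hg hε,
    exists_integrableOn_not_FHT_ae_eq⟩
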